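/- arXiv:2506.20568 — 3 statements merged into one kernel-verified Lean document; each statement's English description precedes it below -/
import Mathlib

section
/- Two stability parameters θ, η in the semistable cone of d are GIT equivalent if and only if for every nonzero proper subdimension vector e of d, the segment [θ, η] is either contained in W_e or does not meet W_e. -/
open scoped BigOperators

/-- A representation of a quiver with vertex set `Q0` and arrow set `Q1`
(with source and target maps `s t : Q1 → Q0`) over a field `k`:
a finite-dimensional `k`-vector space at each vertex and a linear map for each arrow. -/
structure QRep (k : Type) [Field k] {Q0 Q1 : Type} (s t : Q1 → Q0) where
  V : Q0 → Type
  [addgrp : ∀ i, AddCommGroup (V i)]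
  [mod : ∀ i, Module k (V i)]
  [fd : ∀ i, FiniteDimensional k (V i)]
  hom : ∀ a : Q1, V (s a) →ₗ[k] V (t a)

attribute [instance] QRep.addgrp QRep.mod QRep.fd

namespace QRep

variable {k : Type} [Field k] {Q0 Q1 : Type} {s t : Q1 → Q0}

/-- The dimension vector of a representation. -/
noncomputable def dimVec (M : QRep k s t) : Q0 → ℕ := fun i => Module.finrank k (M.V i)

/-- A family of subspaces is a subrepresentation if it is invariant under all arrow maps. -/
def IsSubrep (M : QRep k s t) (U : ∀ i, Submodule k (M.V i)) : Prop :=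
  ∀ a : Q1, ∀ x ∈ U (s a), M.hom a x ∈ U (t a)

/-- The dimension vector of a family of subspaces. -/
noncomputable def subDim (M : QRep k s t) (U : ∀ i, Submodule k (M.V i)) : Q0 → ℕ :=
  fun i => Module.finrank k (U i)

/-- The subrepresentation determined by an invariant family of subspaces. -/
def subRep (M : QRep k s t) (U : ∀ i, Submodule k (M.V i)) (h : M.IsSubrep U) :
    QRep k s t where
  V := fun i => U i
  hom := fun a => (M.hom a).restrict (fun x hx => h a x hx)

/-- The quotient representation by an invariant family of subspaces. -/
def quotRep (M : QRep k s t) (U : ∀ i, Submodule k (M.V i)) (h : M.IsSubrep U) :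
    QRep k s t where
  V := fun i => M.V i ⧸ U i
  hom := fun a => (U (s a)).mapQ (U (t a)) (M.hom a) (fun x hx => h a x hx)

/-- Direct sum of two representations. -/
def dsum (M N : QRep k s t) : QRep k s t where
  V := fun i => M.V i × N.V i
  hom := fun a => (M.hom a).prodMap (N.hom a)

variable [Fintype Q0]

/-- The pairing `θ(d) = θ · d` of a stability parameter with a dimension vector. -/
def pair (θ : Q0 → ℝ) (d : Q0 → ℕ) : ℝ := ∑ i, θ i * (d i : ℝ)

/-- `θ`-semistability: `θ(M) = 0` and `θ(M') ≤ 0` for all subrepresentations. -/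
def Semistable (θ : Q0 → ℝ) (M : QRep k s t) : Prop :=
  pair θ M.dimVec = 0 ∧
    ∀ U : ∀ i, Submodule k (M.V i), M.IsSubrep U → pair θ (M.subDim U) ≤ 0

/-- `θ`-stability: `θ(M) = 0` and `θ(M') < 0` for all proper nonzero subrepresentations. -/
def Stable (θ : Q0 → ℝ) (M : QRep k s t) : Prop :=
  pair θ M.dimVec = 0 ∧
    ∀ U : ∀ i, Submodule k (M.V i), M.IsSubrep U →
      U ≠ (fun _ => ⊥) → U ≠ (fun _ => ⊤) → pair θ (M.subDim U) < 0

end QRep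

section Defs

variable (k : Type) [Field k] {Q0 Q1 : Type} (s t : Q1 → Q0)

/-- `e` is a generic subdimension vector of `d` (Schofield's characterization as definition):
every representation of dimension vector `d` admits a subrepresentation of dimension vector `e`. -/
def GenericSub (e d : Q0 → ℕ) : Prop :=
  e ≤ d ∧ ∀ M : QRep k s t, M.dimVec = d →
    ∃ U : ∀ i, Submodule k (M.V i), M.IsSubrep U ∧ M.subDim U = e

variable [Fintype Q0]

/-- The semistable cone of `d`: stability parameters orthogonal to `d` admitting a
semistable representation of dimension vector `d`. -/
def SstCone (d : Q0 → ℕ) : Set (Q0 → ℝ) :=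
  {θ | QRep.pair θ d = 0 ∧ ∃ M : QRep k s t, M.dimVec = d ∧ QRep.Semistable θ M}

/-- The wall `W_e`: parameters `θ` orthogonal to `d` and `e` such that some `θ`-semistable
representation of dimension vector `d` has a subrepresentation of dimension vector `e`. -/
def Wall (d e : Q0 → ℕ) : Set (Q0 → ℝ) :=
  {θ | QRep.pair θ d = 0 ∧ QRep.pair θ e = 0 ∧
    ∃ (M : QRep k s t) (U : ∀ i, Submodule k (M.V i)),
      M.dimVec = d ∧ M.IsSubrep U ∧ M.subDim U = e ∧ QRep.Semistable θ M}

/-- GIT equivalence of stability parameters: equal semistable loci. -/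
def GITEquiv (d : Q0 → ℕ) (θ η : Q0 → ℝ) : Prop :=
  ∀ M : QRep k s t, M.dimVec = d → (QRep.Semistable θ M ↔ QRep.Semistable η M)

end Defs

/-- The hyperplane `H_e` inside the stability space of `d`. -/
def Hset {Q0 : Type} [Fintype Q0] (d e : Q0 → ℕ) : Set (Q0 → ℝ) :=
  {θ | QRep.pair θ d = 0 ∧ QRep.pair θ e = 0}

section Euler

variable {Q0 Q1 : Type} [Fintype Q0] [Fintype Q1]

/-- The Euler form of the quiver. -/
def euler (s t : Q1 → Q0) (x y : Q0 → ℤ) : ℤ :=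
  (∑ i, x i * y i) - ∑ a, x (s a) * y (t a)

/-- `ext(d, e)`: the maximum of `−⟨d', e⟩` over generic subdimension vectors `d' ↪ d`. -/
noncomputable def extGen (k : Type) [Field k] (s t : Q1 → Q0) (d e : Q0 → ℕ) : ℤ :=
  sSup {z : ℤ | ∃ d' : Q0 → ℕ, GenericSub k s t d' d ∧
    z = -(euler s t (fun i => (d' i : ℤ)) (fun i => (e i : ℤ)))}

end Euler

section Schur

variable {Q0 Q1 : Type} (s t : Q1 → Q0)

/-- Coordinates on the representation space `Rep(Q, d)`. -/
def RepCoords (d : Q0 → ℕ) : Type := Σ a : Q1, Fin (d (t a)) × Fin (d (s a))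

/-- The representation associated to a point of the representation space. -/
def matToRep (k : Type) [Field k] (d : Q0 → ℕ)
    (m : ∀ a : Q1, Matrix (Fin (d (t a))) (Fin (d (s a))) k) : QRep k s t where
  V := fun i => Fin (d i) → k
  hom := fun a => Matrix.mulVecLin (m a)

/-- A nonzero representation is indecomposable if it is not a direct sum of two nonzero
subrepresentations. -/
def Indecomposable (k : Type) [Field k] (M : QRep k s t) : Prop :=
  (∃ i, Module.finrank k (M.V i) ≠ 0) ∧
    ¬ ∃ U W : ∀ i, Submodule k (M.V i), M.IsSubrep U ∧ M.IsSubrep W ∧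
        U ≠ (fun _ => ⊥) ∧ W ≠ (fun _ => ⊥) ∧ ∀ i, IsCompl (U i) (W i)

/-- `d` is a Schur root: a general representation of dimension vector `d` is indecomposable,
i.e. all representations outside the vanishing locus of some nonzero polynomial on the
representation space are indecomposable. -/
def IsSchurRoot (k : Type) [Field k] (d : Q0 → ℕ) : Prop :=
  ∃ p : MvPolynomial (RepCoords s t d) k, p ≠ 0 ∧
    ∀ m : ∀ a : Q1, Matrix (Fin (d (t a))) (Fin (d (s a))) k,
      MvPolynomial.eval (fun x => m x.1 x.2.1 x.2.2) p ≠ 0 →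
        Indecomposable s t k (matToRep s t k d m)

end Schur


namespace GITW

section one
variable {k : Type} [Field k] {P Y : Type} [AddCommGroup P] [Module k P]
  [AddCommGroup Y] [Module k Y]

/-- codimension -/
noncomputable def cd (L : Submodule k P) : ℕ := Module.finrank k (P ⧸ L)

lemma fin_of_le {A B : Submodule k P} (h : A ≤ B) [Module.Finite k (P ⧸ A)] :
    Module.Finite k (P ⧸ B) :=
  Module.Finite.of_surjective (Submodule.factor h) (Submodule.factor_surjective h)

lemma cd_key (L : Submodule k P) (g : Y →ₗ[k] P) [Module.Finite k (P ⧸ L)] :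
    cd L = cd (L ⊔ LinearMap.range g) + Module.finrank k (Y ⧸ L.comap g) := by
  unfold cd
  have h1 := Submodule.finrank_quotient_add_finrank (LinearMap.range (L.mkQ ∘ₗ g))
  have h2 : Module.finrank k ((P ⧸ L) ⧸ (LinearMap.range (L.mkQ ∘ₗ g)))
      = Module.finrank k (P ⧸ (L ⊔ LinearMap.range g)) := by
    have e := Submodule.quotientQuotientEquivQuotient L (L ⊔ LinearMap.range g) le_sup_left
    rw [← e.finrank_eq]
    have : Submodule.map L.mkQ (L ⊔ LinearMap.range g) = LinearMap.range (L.mkQ ∘ₗ g) := by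
      rw [Submodule.map_sup, LinearMap.range_comp]
      simp
    rw [this]
  have h3 : Module.finrank k (LinearMap.range (L.mkQ ∘ₗ g))
      = Module.finrank k (Y ⧸ L.comap g) := by
    rw [← (L.mkQ ∘ₗ g).quotKerEquivRange.finrank_eq, LinearMap.ker_comp, Submodule.ker_mkQ]
  omega

lemma fin_map (L : Submodule k P) (T : P →ₗ[k] P) [Module.Finite k (P ⧸ L)]
    [Module.Finite k (P ⧸ LinearMap.range T)] : Module.Finite k (P ⧸ L.map T) := by
  let A := LinearMap.range ((L.map T).mkQ ∘ₗ T)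
  have hk : L ≤ LinearMap.ker ((L.map T).mkQ ∘ₗ T) := by
    intro x hx
    simp only [LinearMap.mem_ker, LinearMap.comp_apply, Submodule.mkQ_apply,
      Submodule.Quotient.mk_eq_zero]
    exact Submodule.mem_map_of_mem hx
  have := fin_of_le hk
  have : Module.Finite k A := Module.Finite.equiv ((L.map T).mkQ ∘ₗ T).quotKerEquivRange
  have e := Submodule.quotientQuotientEquivQuotient (L.map T) (LinearMap.range T)
    (LinearMap.map_le_range)
  have h2 : Submodule.map (L.map T).mkQ (LinearMap.range T) = A := by
    simp only [A, LinearMap.range_comp]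
  rw [h2] at e
  have : Module.Finite k ((P ⧸ L.map T) ⧸ A) := Module.Finite.equiv e.symm
  exact Module.Finite.of_submodule_quotient A

lemma fin_pow (T : P →ₗ[k] P) [Module.Finite k (P ⧸ LinearMap.range T)] (n : ℕ) :
    Module.Finite k (P ⧸ LinearMap.range (T ^ n)) := by
  induction n with
  | zero =>
    have : LinearMap.range (T ^ 0) = ⊤ := by
      rw [pow_zero]; exact LinearMap.range_id
    rw [this]; infer_instance
  | succ n ih =>
    have : LinearMap.range (T ^ (n+1)) = (LinearMap.range (T ^ n)).map T := by
      rw [pow_succ', Module.End.mul_eq_comp, LinearMap.range_comp]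
    rw [this]; exact fin_map _ _

lemma cd_map (L : Submodule k P) (T : P →ₗ[k] P) (hT : Function.Injective T)
    [Module.Finite k (P ⧸ L)]
    [Module.Finite k (P ⧸ LinearMap.range T)] :
    cd (L.map T) = cd (LinearMap.range T) + cd L := by
  have := fin_map L T
  rw [cd_key (L.map T) T, Submodule.comap_map_eq_of_injective hT,
    sup_eq_right.2 LinearMap.map_le_range]
  rfl

lemma cd_sup_inf (A B : Submodule k P) [Module.Finite k (P ⧸ A)] [Module.Finite k (P ⧸ A ⊓ B : Type)] :
    cd (A ⊔ B) + cd (A ⊓ B) = cd A + cd B := by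
  have h1 := cd_key A B.subtype
  have h2 := cd_key (A ⊓ B) B.subtype
  have h3 : (A ⊓ B).comap B.subtype = A.comap B.subtype := by ext x; simp
  rw [h3, Submodule.range_subtype, sup_eq_right.2 inf_le_right] at h2
  rw [Submodule.range_subtype] at h1
  omega

lemma cd_top : cd (⊤ : Submodule k P) = 0 := by
  unfold cd
  exact Module.finrank_zero_of_subsingleton

end one

/-- A family of `k[T]`-modules at each vertex, with arrow maps commuting with `T`. -/
structure Sys (k : Type) [Field k] {Q0 Q1 : Type} (s t : Q1 → Q0) where
  P : Q0 → Type
  [acg : ∀ i, AddCommGroup (P i)]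
  [mod : ∀ i, Module k (P i)]
  T : ∀ i, P i →ₗ[k] P i
  X : ∀ a : Q1, P (s a) →ₗ[k] P (t a)
  comm : ∀ a x, X a (T _ x) = T _ (X a x)
  inj : ∀ i, Function.Injective (T i)
  [fin : ∀ i, Module.Finite k (P i ⧸ LinearMap.range (T i))]

attribute [instance] Sys.acg Sys.mod Sys.fin

section lat
variable {k : Type} [Field k] {Q0 Q1 : Type} {s t : Q1 → Q0} (S : Sys k s t)

structure IsLat (L : ∀ i, Submodule k (S.P i)) : Prop where
  T_mem : ∀ i, ∀ x ∈ L i, S.T i x ∈ L i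
  X_mem : ∀ a, ∀ x ∈ L (s a), S.X a x ∈ L (t a)
  big : ∃ n : ℕ, ∀ i, LinearMap.range (S.T i ^ n) ≤ L i

variable {S}

lemma IsLat.fin {L : ∀ i, Submodule k (S.P i)} (h : IsLat S L) (i : Q0) :
    Module.Finite k (S.P i ⧸ L i) := by
  obtain ⟨n, hn⟩ := h.big
  have := fin_pow (S.T i) n
  exact fin_of_le (hn i)

lemma pow_range_succ (i : Q0) (n : ℕ) :
    LinearMap.range (S.T i ^ (n+1)) = (LinearMap.range (S.T i ^ n)).map (S.T i) := by
  rw [pow_succ', Module.End.mul_eq_comp, LinearMap.range_comp]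

lemma pow_range_anti (i : Q0) : Antitone fun n : ℕ => LinearMap.range (S.T i ^ n) := by
  apply antitone_nat_of_succ_le
  intro n
  rw [pow_succ, Module.End.mul_eq_comp]
  exact LinearMap.range_comp_le_range _ _

lemma lat_top : IsLat S (fun _ => ⊤) :=
  ⟨fun _ _ _ => trivial, fun _ _ _ => trivial, 0, fun _ => le_top⟩

lemma IsLat.map {L : ∀ i, Submodule k (S.P i)} (h : IsLat S L) :
    IsLat S (fun i => (L i).map (S.T i)) := by
  refine ⟨?_, ?_, ?_⟩
  · rintro i _ ⟨x, hx, rfl⟩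
    exact ⟨_, h.T_mem i x hx, rfl⟩
  · rintro a _ ⟨x, hx, rfl⟩
    exact ⟨_, h.X_mem a x hx, (S.comm a x).symm⟩
  · obtain ⟨n, hn⟩ := h.big
    refine ⟨n+1, fun i => ?_⟩
    rw [pow_range_succ]
    exact Submodule.map_mono (hn i)

lemma IsLat.sup {L L' : ∀ i, Submodule k (S.P i)} (h : IsLat S L) (h' : IsLat S L') :
    IsLat S (fun i => L i ⊔ L' i) := by
  refine ⟨?_, ?_, ?_⟩
  · intro i x hx
    obtain ⟨y, hy, z, hz, rfl⟩ := Submodule.mem_sup.1 hx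
    rw [map_add]
    exact Submodule.add_mem_sup (h.T_mem i y hy) (h'.T_mem i z hz)
  · intro a x hx
    obtain ⟨y, hy, z, hz, rfl⟩ := Submodule.mem_sup.1 hx
    rw [map_add]
    exact Submodule.add_mem_sup (h.X_mem a y hy) (h'.X_mem a z hz)
  · obtain ⟨n, hn⟩ := h.big
    exact ⟨n, fun i => (hn i).trans le_sup_left⟩

lemma IsLat.inf {L L' : ∀ i, Submodule k (S.P i)} (h : IsLat S L) (h' : IsLat S L') :
    IsLat S (fun i => L i ⊓ L' i) := by
  refine ⟨fun i x hx => ⟨h.T_mem i x hx.1, h'.T_mem i x hx.2⟩,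
    fun a x hx => ⟨h.X_mem a x hx.1, h'.X_mem a x hx.2⟩, ?_⟩
  obtain ⟨n, hn⟩ := h.big
  obtain ⟨m, hm⟩ := h'.big
  exact ⟨max n m, fun i => le_inf ((pow_range_anti i (le_max_left n m)).trans (hn i))
    ((pow_range_anti i (le_max_right n m)).trans (hm i))⟩

lemma IsLat.comap {L : ∀ i, Submodule k (S.P i)} (h : IsLat S L) :
    IsLat S (fun i => (L i).comap (S.T i)) := by
  refine ⟨fun i x hx => h.T_mem i _ hx, fun a x hx => ?_, ?_⟩
  · have := h.X_mem a _ hx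
    rw [S.comm] at this
    exact this
  · obtain ⟨n, hn⟩ := h.big
    refine ⟨n, fun i x hx => h.T_mem i x (hn i hx)⟩

variable [Fintype Q0]

/-- weighted codimension -/
noncomputable def phi (θ : Q0 → ℝ) (L : ∀ i, Submodule k (S.P i)) : ℝ :=
  ∑ i, θ i * (cd (L i) : ℝ)

variable (S) in
noncomputable def dd : Q0 → ℕ := fun i => cd (LinearMap.range (S.T i))

lemma phi_map (θ : Q0 → ℝ) (hd : QRep.pair θ (dd S) = 0) {L : ∀ i, Submodule k (S.P i)}
    (h : IsLat S L) : phi θ (fun i => (L i).map (S.T i)) = phi θ L := by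
  have h1 : ∀ i, cd ((L i).map (S.T i)) = dd S i + cd (L i) := fun i => by
    have := h.fin i
    exact cd_map _ _ (S.inj i)
  unfold QRep.pair at hd
  simp only [phi, h1, Nat.cast_add, mul_add, Finset.sum_add_distrib, hd, zero_add]

def SSred (θ : Q0 → ℝ) (L : ∀ i, Submodule k (S.P i)) : Prop :=
  ∀ L' : ∀ i, Submodule k (S.P i), IsLat S L' → (∀ i, (L i).map (S.T i) ≤ L' i) →
    (∀ i, L' i ≤ L i) → phi θ L ≤ phi θ L'

lemma ssred_min_aux (θ : Q0 → ℝ) (hd : QRep.pair θ (dd S) = 0) {L : ∀ i, Submodule k (S.P i)}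
    (h : IsLat S L) (hs : SSred θ L) (n : ℕ) : ∀ L2 : ∀ i, Submodule k (S.P i), IsLat S L2 →
    (∀ i, L2 i ≤ L i) → (∀ i, (L i).map (S.T i ^ n) ≤ L2 i) → phi θ L ≤ phi θ L2 := by
  induction n with
  | zero =>
    intro L2 h2 h3 h4
    have : L2 = L := by
      funext i
      refine le_antisymm (h3 i) ?_
      have := h4 i
      rw [pow_zero] at this
      exact (Submodule.map_id (L i)).ge.trans this
    rw [this]
  | succ n ih =>
    intro L2 h2 h3 h4
    have hTL : ∀ i, (L i).map (S.T i) ≤ L i := by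
      rintro i _ ⟨x, hx, rfl⟩; exact h.T_mem i x hx
    have a1 := hs _ (h2.sup h.map) (fun i => le_sup_right) (fun i => sup_le (h3 i) (hTL i))
    have hL3 := h.inf h2.comap
    have a2 := ih _ hL3 (fun i => inf_le_left) (by
      intro i
      refine le_inf ?_ ?_
      · rintro _ ⟨x, hx, rfl⟩
        have : ∀ m : ℕ, (S.T i ^ m) x ∈ L i := by
          intro m
          induction m with
          | zero => simpa using hx
          | succ m im => rw [pow_succ']; exact h.T_mem i _ im
        exact this n
      · rintro _ ⟨x, hx, rfl⟩
        apply h4 i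
        refine ⟨x, hx, ?_⟩
        rw [pow_succ']; rfl)
    have a3 := phi_map θ hd hL3
    have a4 := phi_map θ hd h
    have hi := h2.inf h.map
    have e1 : ∀ i, (L i ⊓ (L2 i).comap (S.T i)).map (S.T i) = L2 i ⊓ (L i).map (S.T i) := by
      intro i
      ext x
      constructor
      · rintro ⟨y, ⟨hy1, hy2⟩, rfl⟩
        exact ⟨hy2, ⟨y, hy1, rfl⟩⟩
      · rintro ⟨h1, ⟨y, hy, rfl⟩⟩
        exact ⟨y, ⟨hy, h1⟩, rfl⟩
    simp only [e1] at a3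
    have a5 : phi θ (fun i => L2 i ⊔ (L i).map (S.T i)) + phi θ (fun i => L2 i ⊓ (L i).map (S.T i))
        = phi θ L2 + phi θ (fun i => (L i).map (S.T i)) := by
      simp only [phi, ← Finset.sum_add_distrib, ← mul_add, ← Nat.cast_add]
      refine Finset.sum_congr rfl fun i _ => ?_
      have := h2.fin i
      have := hi.fin i
      rw [cd_sup_inf]
    linarith

lemma ssred_min (θ : Q0 → ℝ) (hd : QRep.pair θ (dd S) = 0) {L : ∀ i, Submodule k (S.P i)}
    (h : IsLat S L) (hs : SSred θ L) (L2 : ∀ i, Submodule k (S.P i)) (h2 : IsLat S L2) :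
    phi θ L ≤ phi θ L2 := by
  have key : ∀ m : ℕ, ∃ L' : ∀ i, Submodule k (S.P i), IsLat S L' ∧
      (∀ i, L' i ≤ LinearMap.range (S.T i ^ m)) ∧ phi θ L' = phi θ L2 := by
    intro m
    induction m with
    | zero => exact ⟨L2, h2, fun i => by
        rw [pow_zero]; exact le_top.trans (LinearMap.range_id (M := S.P i) (R := k)).ge, rfl⟩
    | succ m ih =>
      obtain ⟨L', h1, h3, h4⟩ := ih
      refine ⟨_, h1.map, fun i => ?_, (phi_map θ hd h1).trans h4⟩
      rw [pow_range_succ]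
      exact Submodule.map_mono (h3 i)
  obtain ⟨m, hm⟩ := h.big
  obtain ⟨L', h1, h3, h4⟩ := key m
  obtain ⟨n, hn⟩ := h1.big
  rw [← h4]
  exact ssred_min_aux θ hd h hs n L' h1 (fun i => (h3 i).trans (hm i))
    (fun i => LinearMap.map_le_range.trans (hn i))

lemma ss_iff (θ : Q0 → ℝ) {L : ∀ i, Submodule k (S.P i)} (h : IsLat S L) (R : QRep k s t)
    (p : ∀ i, L i →ₗ[k] R.V i) (hp : ∀ i, Function.Surjective (p i))
    (hk : ∀ i x, p i x = 0 ↔ (x : S.P i) ∈ (L i).map (S.T i))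
    (hc : ∀ a (x : L (s a)), p (t a) ⟨S.X a x, h.X_mem a x x.2⟩ = R.hom a (p _ x))
    (hθ : QRep.pair θ R.dimVec = 0) : SSred θ L ↔ QRep.Semistable θ R := by
  let lift : (∀ i, Submodule k (R.V i)) → ∀ i, Submodule k (S.P i) :=
    fun W i => ((W i).comap (p i)).map (L i).subtype
  have mem_lift : ∀ W i x, x ∈ lift W i ↔ ∃ hx : x ∈ L i, p i ⟨x, hx⟩ ∈ W i := by
    intro W i x
    simp [lift]
  have lat_lift : ∀ W, R.IsSubrep W → IsLat S (lift W) := by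
    intro W hW
    refine ⟨?_, ?_, ?_⟩
    · intro i x hx
      obtain ⟨hx, hx2⟩ := (mem_lift _ _ _).1 hx
      refine (mem_lift _ _ _).2 ⟨h.T_mem i x hx, ?_⟩
      rw [(hk i _).2 ⟨x, hx, rfl⟩]
      exact zero_mem _
    · intro a x hx
      obtain ⟨hx, hx2⟩ := (mem_lift _ _ _).1 hx
      refine (mem_lift _ _ _).2 ⟨h.X_mem a x hx, ?_⟩
      rw [hc a ⟨x, hx⟩]
      exact hW a _ hx2
    · obtain ⟨n, hn⟩ := h.big
      refine ⟨n+1, fun i => ?_⟩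
      rw [pow_range_succ]
      rintro _ ⟨x, hx, rfl⟩
      refine (mem_lift _ _ _).2 ⟨h.T_mem i x (hn i hx), ?_⟩
      rw [(hk i _).2 ⟨x, hn i hx, rfl⟩]
      exact zero_mem _
  have phi_lift : ∀ W, R.IsSubrep W → phi θ (lift W) = phi θ L - QRep.pair θ (R.subDim W) := by
    intro W hW
    have h1 : ∀ i, cd (lift W i) + R.subDim W i = cd (L i) + R.dimVec i := by
      intro i
      have := (lat_lift W hW).fin i
      have h2 := cd_key (lift W i) (L i).subtype
      rw [Submodule.range_subtype, sup_eq_right.2 (Submodule.map_subtype_le _ _),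
        Submodule.comap_map_eq_of_injective (Submodule.subtype_injective _)] at h2
      have h3 := Submodule.finrank_quotient_add_finrank (W i)
      have h4 : Module.finrank k (L i ⧸ (W i).comap (p i)) = Module.finrank k (R.V i ⧸ W i) := by
        have e := LinearMap.quotKerEquivOfSurjective ((W i).mkQ ∘ₗ p i)
          ((Submodule.mkQ_surjective _).comp (hp i))
        rw [LinearMap.ker_comp, Submodule.ker_mkQ] at e
        exact e.finrank_eq
      simp only [QRep.subDim, QRep.dimVec]
      omega
    have h2 : phi θ (lift W) + QRep.pair θ (R.subDim W) = phi θ L + QRep.pair θ R.dimVec := by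
      simp only [phi, QRep.pair, ← Finset.sum_add_distrib, ← mul_add, ← Nat.cast_add, h1]
    linarith
  constructor
  · intro hs
    refine ⟨hθ, fun W hW => ?_⟩
    have := hs (lift W) (lat_lift W hW) (by
      rintro i _ ⟨x, hx, rfl⟩
      refine (mem_lift _ _ _).2 ⟨h.T_mem i x hx, ?_⟩
      rw [(hk i _).2 ⟨x, hx, rfl⟩]
      exact zero_mem _) (fun i => Submodule.map_subtype_le _ _)
    rw [phi_lift W hW] at this
    linarith
  · rintro ⟨-, hs⟩ L' h' h1 h2
    let W : ∀ i, Submodule k (R.V i) := fun i => ((L' i).comap (L i).subtype).map (p i)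
    have hW : R.IsSubrep W := by
      rintro a _ ⟨x, hx, rfl⟩
      rw [← hc]
      exact ⟨_, h'.X_mem a _ hx, rfl⟩
    have e : lift W = L' := by
      funext i
      ext x
      rw [mem_lift]
      constructor
      · rintro ⟨hx, ⟨y, hy, hxy⟩⟩
        have h3 : p i (⟨x, hx⟩ - y) = 0 := by rw [map_sub, hxy, sub_self]
        rw [hk] at h3
        have h4 := (L' i).add_mem (h1 i h3) hy
        simpa using h4
      · intro hx
        exact ⟨h2 i hx, ⟨⟨x, h2 i hx⟩, hx, rfl⟩⟩
    have h3 := phi_lift W hW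
    rw [e] at h3
    have := hs W hW
    linarith

lemma fin_sub_quot {L : ∀ i, Submodule k (S.P i)} (h : IsLat S L) (i : Q0) :
    Module.Finite k (L i ⧸ ((L i).map (S.T i)).comap (L i).subtype) := by
  have := h.map.fin i
  refine Module.Finite.of_injective
    (Submodule.mapQ _ ((L i).map (S.T i)) (L i).subtype le_rfl) ?_
  rw [← LinearMap.ker_eq_bot]
  simp [Submodule.mapQ, Submodule.ker_liftQ_eq_bot, LinearMap.ker_comp]

/-- reduction of a lattice -/
def red (L : ∀ i, Submodule k (S.P i)) (h : IsLat S L) : QRep k s t where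
  V := fun i => L i ⧸ ((L i).map (S.T i)).comap (L i).subtype
  fd := fun i => fin_sub_quot h i
  hom := fun a => Submodule.mapQ _ _ ((S.X a).restrict (h.X_mem a)) (by
    intro x hx
    exact h.map.X_mem a _ hx)

lemma red_dim {L : ∀ i, Submodule k (S.P i)} (h : IsLat S L) : (red L h).dimVec = dd S := by
  funext i
  have := h.map.fin i
  have := h.fin i
  have h2 := cd_key ((L i).map (S.T i)) (L i).subtype
  have h3 := cd_map (L i) (S.T i) (S.inj i)
  rw [Submodule.range_subtype, sup_eq_right.2 (by
    rintro _ ⟨x, hx, rfl⟩; exact h.T_mem i x hx)] at h2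
  have h4 : (red L h).dimVec i = 
    Module.finrank k (L i ⧸ ((L i).map (S.T i)).comap (L i).subtype) := rfl
  rw [h4]
  simp only [dd]
  omega

lemma red_ss (θ : Q0 → ℝ) (hd : QRep.pair θ (dd S) = 0) {L : ∀ i, Submodule k (S.P i)}
    (h : IsLat S L) : SSred θ L ↔ QRep.Semistable θ (red L h) := by
  refine ss_iff θ h (red L h) (fun i => Submodule.mkQ _) (fun i => Submodule.mkQ_surjective _)
    ?_ ?_ (by rw [red_dim]; exact hd)
  · intro i x
    exact Submodule.Quotient.mk_eq_zero _
  · intro a x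
    rfl

end lat

section comb
variable {Q0 : Type} [Fintype Q0]

lemma comb (θ : Q0 → ℝ) (d : Q0 → ℕ) : ∃ F : Set ℝ, F.Finite ∧ ∀ (n : ℕ) (u : ℕ → Q0 → ℕ),
    Monotone u → (∀ c, u c ≤ d) → (∀ c, u c = u (c+1) → QRep.pair θ (u c) ≤ 0) →
    0 ≤ ∑ c ∈ Finset.range n, QRep.pair θ (u c) →
    ∑ c ∈ Finset.range n, QRep.pair θ (u c) ∈ F := by
  classical
  let E : Finset (Q0 → ℕ) := Finset.Iic d
  let w : (Q0 → ℕ) → ℝ := fun e => QRep.pair θ e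
  let C : ℝ := ∑ e ∈ E, max (w e) 0
  have hB : ∀ e, ∃ b : ℕ, w e ≠ 0 → C < b * |w e| := by
    intro e
    by_cases h : w e = 0
    · exact ⟨0, fun h' => absurd h h'⟩
    · obtain ⟨b, hb⟩ := exists_nat_gt (C / |w e|)
      exact ⟨b, fun _ => (div_lt_iff₀ (abs_pos.2 h)).1 hb⟩
  choose b hb using hB
  let B : ℕ := ∑ e ∈ E, b e + 1
  refine ⟨Set.range (fun m : {e // e ∈ E} → Fin (B+1) => ∑ e, ((m e : ℕ) : ℝ) * w e),
    Set.finite_range _, ?_⟩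
  intro n u hu hud hz h0
  let m : (Q0 → ℕ) → ℕ := fun e => ((Finset.range n).filter (fun c => u c = e)).card
  have hsum : ∑ c ∈ Finset.range n, QRep.pair θ (u c) = ∑ e ∈ E, (m e : ℝ) * w e := by
    rw [← Finset.sum_fiberwise_of_maps_to (s := Finset.range n) (t := E) (g := u)
      (fun c _ => Finset.mem_Iic.2 (hud c))]
    refine Finset.sum_congr rfl fun e _ => ?_
    rw [Finset.sum_congr rfl (g := fun _ => w e)]
    · simp [m]
    · intro c hc
      rw [(Finset.mem_filter.1 hc).2]
  have hpos : ∀ e, 0 < w e → m e ≤ 1 := by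
    intro e he
    have aux : ∀ c1 c2, u c1 = e → u c2 = e → c1 < c2 → False := by
      intro c1 c2 h1 h2 h3
      have h4 : u c1 = u (c1+1) := le_antisymm (hu (Nat.le_succ _))
        ((hu (Nat.succ_le_of_lt h3)).trans (by rw [h2, h1]))
      have h5 := hz c1 h4
      rw [h1] at h5
      exact absurd h5 (not_le.2 he)
    refine Finset.card_le_one.2 ?_
    intro c1 h1 c2 h2
    have h1 := (Finset.mem_filter.1 h1).2
    have h2 := (Finset.mem_filter.1 h2).2
    rcases lt_trichotomy c1 c2 with h | h | h
    · exact (aux _ _ h1 h2 h).elim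
    · exact h
    · exact (aux _ _ h2 h1 h).elim
  have hterm : ∀ e ∈ E, 0 ≤ max (w e) 0 - m e * w e := by
    intro e _
    rcases le_or_gt (w e) 0 with h | h
    · rw [max_eq_right h]
      have : (m e : ℝ) * w e ≤ 0 := mul_nonpos_of_nonneg_of_nonpos (Nat.cast_nonneg _) h
      linarith
    · rw [max_eq_left h.le]
      have h1 : (m e : ℝ) ≤ 1 := by exact_mod_cast hpos e h
      nlinarith
  have hle : ∀ e ∈ E, w e ≠ 0 → m e ≤ B := by
    intro e he hw
    rcases lt_or_gt_of_ne hw with h | h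
    · have h1 := Finset.single_le_sum hterm he
      rw [Finset.sum_sub_distrib, ← hsum, max_eq_right h.le] at h1
      have h2 := hb e hw
      rw [abs_of_neg h] at h2
      have h3 : (m e : ℝ) * (-w e) ≤ C := by
        have : C = ∑ e ∈ E, max (w e) 0 := rfl
        linarith
      have h4 : (m e : ℝ) < b e := lt_of_mul_lt_mul_right (h3.trans_lt h2) (by linarith)
      have h5 : m e < b e := by exact_mod_cast h4
      have h6 : b e ≤ ∑ e ∈ E, b e := Finset.single_le_sum (fun _ _ => Nat.zero_le _) he
      omega
    · have := hpos e h
      omega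
  refine ⟨fun e => if hw : w e.1 = 0 then 0 else ⟨m e.1, Nat.lt_succ_of_le (hle e.1 e.2 hw)⟩, ?_⟩
  rw [hsum, ← Finset.sum_coe_sort E]
  refine Finset.sum_congr rfl fun e _ => ?_
  by_cases hw : w e.1 = 0
  · simp [hw]
  · simp [hw]

end comb

section conc
variable {k : Type} [Field k] {Q0 Q1 : Type} {s t : Q1 → Q0}

/-- shift -/
noncomputable def sh (k : Type) [Field k] (V : Type) [AddCommGroup V] [Module k V] :
    (ℕ →₀ V) →ₗ[k] (ℕ →₀ V) := Finsupp.lmapDomain V k Nat.succ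

lemma sh_single (V : Type) [AddCommGroup V] [Module k V] (n : ℕ) (v : V) :
    sh k V (Finsupp.single n v) = Finsupp.single (n+1) v := by
  simp [sh]

lemma sh_pow_single (V : Type) [AddCommGroup V] [Module k V] (m n : ℕ) (v : V) :
    (sh k V ^ m) (Finsupp.single n v) = Finsupp.single (n+m) v := by
  induction m with
  | zero => simp
  | succ m ih => rw [pow_succ', Module.End.mul_apply, ih, sh_single]; rfl

lemma sh_range (V : Type) [AddCommGroup V] [Module k V] :
    LinearMap.range (sh k V) = LinearMap.ker (Finsupp.lapply (R := k) (M := V) 0) := by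
  ext x
  constructor
  · rintro ⟨y, rfl⟩
    simp only [LinearMap.mem_ker, Finsupp.lapply_apply, sh, Finsupp.lmapDomain_apply]
    apply Finsupp.mapDomain_of_notMem_range
    simp
  · intro hx
    simp only [LinearMap.mem_ker, Finsupp.lapply_apply] at hx
    refine ⟨x.comapDomain Nat.succ (Nat.succ_injective.injOn), ?_⟩
    simp only [sh, Finsupp.lmapDomain_apply]
    apply Finsupp.mapDomain_comapDomain _ Nat.succ_injective
    intro n hn
    rcases n with _ | n
    · simp [hx] at hn
    · exact ⟨n, rfl⟩

lemma lapply_surj (V : Type) [AddCommGroup V] [Module k V] :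
    Function.Surjective (Finsupp.lapply (R := k) (M := V) (0 : ℕ)) :=
  fun v => ⟨Finsupp.single 0 v, by simp⟩

noncomputable def shEquiv (k : Type) [Field k] (V : Type) [AddCommGroup V] [Module k V] :
    ((ℕ →₀ V) ⧸ LinearMap.range (sh k V)) ≃ₗ[k] V :=
  (Submodule.quotEquivOfEq _ _ (sh_range V)).trans
    (LinearMap.quotKerEquivOfSurjective _ (lapply_surj V))

/-- The arrow maps of the pencil `M + T N` on polynomials. -/
noncomputable def Xc (M : QRep k s t) (N : ∀ a, M.V (s a) →ₗ[k] M.V (t a)) (a : Q1) :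
    (ℕ →₀ M.V (s a)) →ₗ[k] (ℕ →₀ M.V (t a)) :=
  Finsupp.mapRange.linearMap (M.hom a) + sh k (M.V (t a)) ∘ₗ Finsupp.mapRange.linearMap (N a)

lemma Xc_single (M : QRep k s t) (N : ∀ a, M.V (s a) →ₗ[k] M.V (t a))
    (a : Q1) (n : ℕ) (v : M.V (s a)) :
    Xc M N a (Finsupp.single n v) =
      Finsupp.single n (M.hom a v) + Finsupp.single (n+1) (N a v) := by
  simp [Xc, sh_single]

/-- The pencil `M + T N` on polynomials. -/
noncomputable def conc (M : QRep k s t) (N : ∀ a, M.V (s a) →ₗ[k] M.V (t a)) : Sys k s t where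
  P := fun i => ℕ →₀ M.V i
  T := fun i => sh k (M.V i)
  X := Xc M N
  comm := by
    intro a x
    induction x using Finsupp.induction_linear with
    | zero => simp
    | add x y hx hy => simp only [map_add, hx, hy]
    | single n v => simp [sh_single, Xc_single]
  inj := fun i => Finsupp.mapDomain_injective Nat.succ_injective
  fin := fun i => Module.Finite.equiv (shEquiv k (M.V i)).symm

lemma dd_conc (M : QRep k s t) (N : ∀ a, M.V (s a) →ₗ[k] M.V (t a)) :
    dd (conc M N) = M.dimVec := by
  funext i
  exact (shEquiv k (M.V i)).finrank_eq

section plain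
variable {V V' : Type} [AddCommGroup V] [Module k V] [AddCommGroup V'] [Module k V']

/-- partial sums `L + (polynomials of degree < c)` -/
noncomputable def St (L : Submodule k (ℕ →₀ V)) (c : ℕ) : Submodule k (ℕ →₀ V) :=
  L ⊔ Finsupp.supported V k (Set.Iio c)

/-- leading coefficients in degree `c` -/
noncomputable def Uc (L : Submodule k (ℕ →₀ V)) (c : ℕ) : Submodule k V :=
  (St L c).comap (Finsupp.lsingle c)

lemma St_zero (L : Submodule k (ℕ →₀ V)) : St L 0 = L := by
  unfold St
  have : Set.Iio (0:ℕ) = ∅ := by ext; simp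
  rw [this, Finsupp.supported_empty, sup_bot_eq]

lemma supp_succ (c : ℕ) :
    Finsupp.supported V k (Set.Iio (c+1)) =
      Finsupp.supported V k (Set.Iio c) ⊔ LinearMap.range (Finsupp.lsingle (R := k) c) := by
  apply le_antisymm
  · intro x hx
    rw [← Finsupp.erase_add_single c x]
    refine Submodule.add_mem_sup ?_ ⟨x c, rfl⟩
    rw [Finsupp.mem_supported'] at hx ⊢
    intro n hn
    by_cases h : n = c
    · subst h; simp
    · rw [Finsupp.erase_ne h]
      apply hx
      simp only [Set.mem_Iio] at hn ⊢
      omega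
  · refine sup_le (Finsupp.supported_mono (Set.Iio_subset_Iio (Nat.le_succ c))) ?_
    rintro _ ⟨v, rfl⟩
    exact Finsupp.single_mem_supported k v (by simp)

lemma St_succ (L : Submodule k (ℕ →₀ V)) (c : ℕ) :
    St L (c+1) = St L c ⊔ LinearMap.range (Finsupp.lsingle (R := k) c) := by
  unfold St
  rw [supp_succ, sup_assoc]

lemma St_top {L : Submodule k (ℕ →₀ V)} (n : ℕ)
    (hn : LinearMap.range (sh k V ^ n) ≤ L) : St L n = ⊤ := by
  rw [eq_top_iff]
  rintro x -
  induction x using Finsupp.induction_linear with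
  | zero => exact zero_mem _
  | add x y hx hy => exact add_mem hx hy
  | single m v =>
    rcases lt_or_ge m n with h | h
    · exact Submodule.mem_sup_right (Finsupp.single_mem_supported k v h)
    · refine Submodule.mem_sup_left (hn ⟨Finsupp.single (m - n) v, ?_⟩)
      rw [sh_pow_single, Nat.sub_add_cancel h]

lemma cd_sum [Module.Finite k V] (L : Submodule k (ℕ →₀ V)) [Module.Finite k ((ℕ →₀ V) ⧸ L)]
    (n : ℕ) :
    cd L + ∑ c ∈ Finset.range n, Module.finrank k (Uc L c) =
      cd (St L n) + n * Module.finrank k V := by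
  have hfin : ∀ c, Module.Finite k ((ℕ →₀ V) ⧸ St L c) := by
    intro c
    exact fin_of_le (A := L) le_sup_left
  induction n with
  | zero =>
    rw [St_zero]; simp
  | succ n ih =>
    have := hfin n
    have h1 := cd_key (St L n) (Finsupp.lsingle (R := k) n)
    rw [← St_succ] at h1
    have h2 := Submodule.finrank_quotient_add_finrank (Uc L n)
    rw [Finset.sum_range_succ]
    have h3 : Module.finrank k (V ⧸ (St L n).comap (Finsupp.lsingle (R := k) n)) =
      Module.finrank k (V ⧸ Uc L n) := rfl
    rw [add_mul, one_mul]
    omega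

lemma supp_le (g : (ℕ →₀ V) →ₗ[k] (ℕ →₀ V'))
    (hg : ∀ n v, g (Finsupp.single n v) ∈ Finsupp.supported V' k (Set.Iio (n+2))) (c : ℕ) :
    Finsupp.supported V k (Set.Iio c) ≤ (Finsupp.supported V' k (Set.Iio (c+1))).comap g := by
  induction c with
  | zero =>
    have : Set.Iio (0:ℕ) = ∅ := by ext; simp
    rw [this, Finsupp.supported_empty]
    exact bot_le
  | succ c ih =>
    rw [supp_succ]
    refine sup_le (ih.trans (Submodule.comap_mono
      (Finsupp.supported_mono (Set.Iio_subset_Iio (Nat.le_succ _))))) ?_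
    rintro _ ⟨v, rfl⟩
    exact hg c v

lemma St_le (L : Submodule k (ℕ →₀ V)) (L' : Submodule k (ℕ →₀ V'))
    (g : (ℕ →₀ V) →ₗ[k] (ℕ →₀ V')) (hL : L ≤ L'.comap g)
    (hg : ∀ n v, g (Finsupp.single n v) ∈ Finsupp.supported V' k (Set.Iio (n+2))) (c : ℕ) :
    St L c ≤ (St L' (c+1)).comap g :=
  sup_le (hL.trans (Submodule.comap_mono le_sup_left))
    ((supp_le g hg c).trans (Submodule.comap_mono le_sup_right))

lemma Uc_mono (L : Submodule k (ℕ →₀ V)) (hL : ∀ x ∈ L, sh k V x ∈ L) : Monotone (Uc L) := by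
  apply monotone_nat_of_le_succ
  intro c v hv
  have h1 := St_le L L (sh k V) hL (fun n v => by
    rw [sh_single]; exact Finsupp.single_mem_supported k v (by simp)) c hv
  simp only [Submodule.mem_comap, Finsupp.lsingle_apply, sh_single] at h1
  exact h1

end plain

lemma Uc_X (M : QRep k s t) (N : ∀ a, M.V (s a) →ₗ[k] M.V (t a))
    (L : ∀ i, Submodule k (ℕ →₀ M.V i)) (a : Q1) (hL : ∀ x ∈ L (s a), Xc M N a x ∈ L (t a))
    (c : ℕ) (v : M.V (s a)) (hv : v ∈ Uc (L (s a)) c) : N a v ∈ Uc (L (t a)) (c+1) := by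
  have h1 := St_le (L (s a)) (L (t a)) (Xc M N a) hL (fun n v => by
    rw [Xc_single]
    exact add_mem (Finsupp.single_mem_supported k _ (by simp))
      (Finsupp.single_mem_supported k _ (by simp))) c hv
  simp only [Submodule.mem_comap, Finsupp.lsingle_apply, Xc_single] at h1
  have h2 : Finsupp.single c (M.hom a v) ∈ St (L (t a)) (c+1) :=
    Submodule.mem_sup_right (Finsupp.single_mem_supported k _ (by simp))
  exact (Submodule.add_mem_iff_right _ h2).1 h1

variable [Fintype Q0]

/-- The values `phi θ L ≤ 0` form a finite set if `N` is `θ`-semistable. -/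
lemma phi_finite (θ : Q0 → ℝ) (M : QRep k s t) (N : ∀ a, M.V (s a) →ₗ[k] M.V (t a))
    (hd : QRep.pair θ M.dimVec = 0)
    (hN : ∀ U : ∀ i, Submodule k (M.V i), (∀ a, ∀ x ∈ U (s a), N a x ∈ U (t a)) →
      QRep.pair θ (fun i => Module.finrank k (U i)) ≤ 0) :
    ∃ F : Set ℝ, F.Finite ∧ ∀ L : ∀ i, Submodule k ((conc M N).P i), IsLat (conc M N) L →
      phi θ L ≤ 0 → phi θ L ∈ F := by
  obtain ⟨F, hF, hF2⟩ := comb θ M.dimVec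
  refine ⟨(fun x => -x) '' F, hF.image _, fun L h hle => ?_⟩
  obtain ⟨n, hn⟩ := h.big
  let L' : ∀ i, Submodule k (ℕ →₀ M.V i) := L
  let u : ℕ → Q0 → ℕ := fun c i => Module.finrank k (Uc (L' i) c)
  have hm : ∀ i, Monotone (Uc (L' i)) := fun i => Uc_mono (L' i) (h.T_mem i)
  have hc : ∀ i, cd (L i) + ∑ c ∈ Finset.range n, u c i = n * M.dimVec i := by
    intro i
    have : Module.Finite k ((ℕ →₀ M.V i) ⧸ L' i) := h.fin i
    have h1 := cd_sum (L' i) n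
    rw [St_top (L := L' i) n (hn i), cd_top, zero_add] at h1
    exact h1
  have hphi : phi θ L = - ∑ c ∈ Finset.range n, QRep.pair θ (u c) := by
    have h1 : phi θ L + ∑ c ∈ Finset.range n, QRep.pair θ (u c)
        = n * QRep.pair θ M.dimVec := by
      simp only [phi, QRep.pair]
      rw [Finset.sum_comm, ← Finset.sum_add_distrib, Finset.mul_sum]
      refine Finset.sum_congr rfl fun i _ => ?_
      rw [← Finset.mul_sum, ← mul_add, ← Nat.cast_sum, ← Nat.cast_add, hc i]
      push_cast
      ring
    rw [hd, mul_zero] at h1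
    linarith
  refine ⟨_, hF2 n u ?_ ?_ ?_ ?_, hphi.symm⟩
  · intro c c' hcc i
    exact Submodule.finrank_mono (hm i hcc)
  · intro c i
    exact Submodule.finrank_le _
  · intro c hcc
    have h1 : ∀ i, Uc (L' i) c = Uc (L' i) (c+1) := fun i =>
      Submodule.eq_of_le_of_finrank_eq (hm i (Nat.le_succ c)) (congrFun hcc i)
    refine hN (fun i => Uc (L' i) c) ?_
    intro a x hx
    rw [h1 (t a)]
    exact Uc_X M N L' a (h.X_mem a) c x hx
  · linarith

lemma ss_conc (θ : Q0 → ℝ) (M : QRep k s t) (N : ∀ a, M.V (s a) →ₗ[k] M.V (t a))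
    (hd : QRep.pair θ M.dimVec = 0) :
    SSred (S := conc M N) θ (fun _ => ⊤) ↔ QRep.Semistable θ M := by
  refine ss_iff (S := conc M N) θ lat_top M
    (fun i => (Finsupp.lapply (R := k) (M := M.V i) (0 : ℕ)) ∘ₗ
      (⊤ : Submodule k (ℕ →₀ M.V i)).subtype) ?_ ?_ ?_ hd
  · intro i v
    obtain ⟨x, hx⟩ := lapply_surj (k := k) (M.V i) v
    exact ⟨⟨x, trivial⟩, hx⟩
  · rintro i ⟨x, hx⟩
    have h1 : (⊤ : Submodule k (ℕ →₀ M.V i)).map (sh k (M.V i)) =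
        LinearMap.ker (Finsupp.lapply (R := k) (M := M.V i) 0) := by
      rw [Submodule.map_top, sh_range]
    have h2 : ∀ x : ℕ →₀ M.V i, x ∈ (⊤ : Submodule k (ℕ →₀ M.V i)).map (sh k (M.V i)) ↔
      x ∈ LinearMap.ker (Finsupp.lapply (R := k) (M := M.V i) 0) := by rw [h1]; simp
    exact (h2 x).symm
  · rintro a ⟨x, hx⟩
    have key : ∀ x : ℕ →₀ M.V (s a), Xc M N a x 0 = M.hom a (x 0) := by
      intro x
      induction x using Finsupp.induction_linear with
      | zero => simp
      | add x y hx hy => simp only [map_add, hx, hy, Finsupp.add_apply]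
      | single n v =>
        rw [Xc_single]
        rcases n with _ | n <;> simp
    exact key x

lemma phi_comb (S : Sys k s t) (L : ∀ i, Submodule k (S.P i)) (θ η : Q0 → ℝ) (a b : ℝ) :
    phi (a • θ + b • η) L = a * phi θ L + b * phi η L := by
  simp only [phi, Finset.mul_sum, ← Finset.sum_add_distrib]
  refine Finset.sum_congr rfl fun i _ => ?_
  simp only [Pi.add_apply, Pi.smul_apply, smul_eq_mul]
  ring

lemma pair_comb (e : Q0 → ℕ) (θ η : Q0 → ℝ) (a b : ℝ) :
    QRep.pair (a • θ + b • η) e = a * QRep.pair θ e + b * QRep.pair η e := by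
  simp only [QRep.pair, Finset.mul_sum, ← Finset.sum_add_distrib]
  refine Finset.sum_congr rfl fun i _ => ?_
  simp only [Pi.add_apply, Pi.smul_apply, smul_eq_mul]
  ring

lemma phi_top (S : Sys k s t) (θ : Q0 → ℝ) : phi (S := S) θ (fun _ => ⊤) = 0 := by
  simp [phi, cd_top]

/-- convexity of GIT classes -/
lemma git_convex (d : Q0 → ℕ) (θ η : Q0 → ℝ)
    (hθ : θ ∈ SstCone k s t d) (hη : η ∈ SstCone k s t d) (hg : GITEquiv k s t d θ η)
    (a b : ℝ) (ha : 0 < a) (hb : 0 < b) (M : QRep k s t) (hM : M.dimVec = d)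
    (hs : QRep.Semistable (a • θ + b • η) M) : QRep.Semistable θ M := by
  obtain ⟨hθd, N0, hN0, hN0s⟩ := hθ
  have hηd := hη.1
  have eqv : ∀ i, Nonempty (M.V i ≃ₗ[k] N0.V i) := fun i =>
    ⟨LinearEquiv.ofFinrankEq _ _ (by
      have := congrFun (hM.trans hN0.symm) i
      exact this)⟩
  let e : ∀ i, M.V i ≃ₗ[k] N0.V i := fun i => (eqv i).some
  let N : ∀ a, M.V (s a) →ₗ[k] M.V (t a) := fun a =>
    (e (t a)).symm.toLinearMap ∘ₗ N0.hom a ∘ₗ (e (s a)).toLinearMap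
  have hN : ∀ U : ∀ i, Submodule k (M.V i), (∀ a, ∀ x ∈ U (s a), N a x ∈ U (t a)) →
      QRep.pair θ (fun i => Module.finrank k (U i)) ≤ 0 := by
    intro U hU
    have h1 := hN0s.2 (fun i => (U i).map (e i).toLinearMap) (by
      rintro a _ ⟨x, hx, rfl⟩
      exact ⟨N a x, hU a x hx, by simp [N]⟩)
    have h2 : N0.subDim (fun i => (U i).map (e i).toLinearMap) =
        fun i => Module.finrank k (U i) := by
      funext i
      exact LinearEquiv.finrank_map_eq (e i) (U i)
    rwa [h2] at h1
  have hθM : QRep.pair θ M.dimVec = 0 := by rw [hM]; exact hθd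
  have hηM : QRep.pair η M.dimVec = 0 := by rw [hM]; exact hηd
  have hζM : QRep.pair (a • θ + b • η) M.dimVec = 0 := hs.1
  have hdd : dd (conc M N) = M.dimVec := dd_conc M N
  obtain ⟨F, hF, hF2⟩ := phi_finite θ M N hθM hN
  let A : Set ℝ := {x | ∃ L : ∀ i, Submodule k ((conc M N).P i), IsLat (conc M N) L ∧
    phi θ L ≤ 0 ∧ x = phi θ L}
  have hA : A.Finite := hF.subset (by
    rintro _ ⟨L, h1, h2, rfl⟩
    exact hF2 L h1 h2)
  obtain ⟨x, ⟨L, hL, hL0, rfl⟩, hmin⟩ := Set.exists_min_image A id hA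
    ⟨0, fun _ => ⊤, lat_top, (phi_top _ θ).le, (phi_top _ θ).symm⟩
  have hmin' : ∀ L', IsLat (conc M N) L' → phi θ L ≤ phi θ L' := by
    intro L' h'
    rcases le_or_gt (phi θ L') 0 with h | h
    · exact hmin _ ⟨L', h', h, rfl⟩
    · linarith
  have s1 : SSred θ L := fun L' h' _ _ => hmin' L' h'
  have s2 := (red_ss θ (by rw [hdd]; exact hθM) hL).1 s1
  have s3 := (hg (red L hL) (by rw [red_dim, hdd, hM])).1 s2
  have s4 := (red_ss η (by rw [hdd]; exact hηM) hL).2 s3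
  have s5 := ssred_min η (by rw [hdd]; exact hηM) hL s4 _ lat_top
  have s6 := (ss_conc (a • θ + b • η) M N hζM).2 hs
  have s7 := ssred_min (a • θ + b • η) (by rw [hdd]; exact hζM) lat_top s6 L hL
  rw [phi_top, phi_comb] at s7
  rw [phi_top] at s5
  have s8 : phi θ L = 0 := by
    by_contra hne
    have h1 : phi θ L < 0 := lt_of_le_of_ne hL0 hne
    nlinarith [mul_pos_of_neg_of_neg h1 (neg_lt_zero.2 ha)]
  refine (ss_conc θ M N hθM).1 (fun L' h' _ _ => ?_)
  rw [phi_top, ← s8]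
  exact hmin' L' h'

end conc

section dsum
variable {k : Type} [Field k] {Q0 Q1 : Type} {s t : Q1 → Q0}

lemma finrank_split {A B : Type} [AddCommGroup A] [Module k A] [AddCommGroup B] [Module k B]
    [Module.Finite k A] [Module.Finite k B] (W : Submodule k (A × B)) :
    Module.finrank k W = Module.finrank k (W.comap (LinearMap.inl k A B)) +
      Module.finrank k (W.map (LinearMap.snd k A B)) := by
  have h1 := LinearMap.finrank_range_add_finrank_ker ((LinearMap.snd k A B).domRestrict W)
  have h2 : LinearMap.range ((LinearMap.snd k A B).domRestrict W) =
      W.map (LinearMap.snd k A B) := by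
    rw [LinearMap.domRestrict, LinearMap.range_comp, Submodule.range_subtype]
  have h3 : Module.finrank k (LinearMap.ker ((LinearMap.snd k A B).domRestrict W)) =
      Module.finrank k (W.comap (LinearMap.inl k A B)) := by
    rw [← Submodule.finrank_map_subtype_eq,
      (Submodule.equivMapOfInjective (LinearMap.inl k A B) LinearMap.inl_injective
        (W.comap (LinearMap.inl k A B))).finrank_eq]
    have hEq : Submodule.map W.subtype (LinearMap.ker ((LinearMap.snd k A B).domRestrict W)) =
        Submodule.map (LinearMap.inl k A B) (Submodule.comap (LinearMap.inl k A B) W) := by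
      ext ⟨x, y⟩
      simp only [Submodule.mem_map, LinearMap.mem_ker, Submodule.mem_comap, Submodule.subtype_apply]
      constructor
      · rintro ⟨⟨⟨x', y'⟩, hw⟩, h, h'⟩
        have h : y' = 0 := h
        subst h
        cases h'
        exact ⟨_, hw, rfl⟩
      · rintro ⟨z, hz, hzz⟩
        cases hzz
        exact ⟨⟨(_, 0), hz⟩, rfl, rfl⟩
    rw [hEq]
  rw [h2, h3] at h1
  omega

variable [Fintype Q0]

lemma pair_add (θ : Q0 → ℝ) (e f g : Q0 → ℕ) (h : ∀ i, g i = e i + f i) :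
    QRep.pair θ g = QRep.pair θ e + QRep.pair θ f := by
  simp only [QRep.pair, ← Finset.sum_add_distrib, ← mul_add, ← Nat.cast_add, h]

/-- If `M` is semistable and `U` has weight zero, then `U ⊕ M/U` is semistable. -/
lemma split_ss (θ : Q0 → ℝ) (M : QRep k s t) (U : ∀ i, Submodule k (M.V i)) (hU : M.IsSubrep U)
    (hs : QRep.Semistable θ M) (h0 : QRep.pair θ (M.subDim U) = 0) :
    ((M.subRep U hU).dsum (M.quotRep U hU)).dimVec = M.dimVec ∧
    QRep.Semistable θ ((M.subRep U hU).dsum (M.quotRep U hU)) := by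
  have hdim : ((M.subRep U hU).dsum (M.quotRep U hU)).dimVec = M.dimVec := by
    funext i
    have h1 := Submodule.finrank_quotient_add_finrank (U i)
    have h2 : Module.finrank k (U i × (M.V i ⧸ U i)) =
      Module.finrank k (U i) + Module.finrank k (M.V i ⧸ U i) := Module.finrank_prod
    have h3 : ((M.subRep U hU).dsum (M.quotRep U hU)).dimVec i =
      Module.finrank k (U i × (M.V i ⧸ U i)) := rfl
    have h4 : M.dimVec i = Module.finrank k (M.V i) := rfl
    omega
  refine ⟨hdim, by rw [hdim]; exact hs.1, fun W0 hW => ?_⟩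
  let W : ∀ i, Submodule k (U i × (M.V i ⧸ U i)) := W0
  let A : ∀ i, Submodule k (M.V i) := fun i =>
    ((W i).comap (LinearMap.inl k (U i) (M.V i ⧸ U i))).map (U i).subtype
  let B : ∀ i, Submodule k (M.V i) := fun i =>
    ((W i).map (LinearMap.snd k (U i) (M.V i ⧸ U i))).comap (U i).mkQ
  have hA : M.IsSubrep A := by
    rintro a _ ⟨x, hx, rfl⟩
    have h1 := hW a _ hx
    refine ⟨⟨M.hom a x, hU a x x.2⟩, ?_, rfl⟩
    have h2 : ((M.subRep U hU).dsum (M.quotRep U hU)).hom a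
        ((LinearMap.inl k (U (s a)) (M.V (s a) ⧸ U (s a))) x) =
        (LinearMap.inl k (U (t a)) (M.V (t a) ⧸ U (t a))) ⟨M.hom a x, hU a x x.2⟩ := by
      refine Prod.ext rfl ?_
      exact map_zero ((M.quotRep U hU).hom a)
    rw [h2] at h1
    exact h1
  have hB : M.IsSubrep B := by
    rintro a x ⟨⟨u, q⟩, hw, hq⟩
    have h1 := hW a _ hw
    refine ⟨_, h1, ?_⟩
    have hq : q = (U (s a)).mkQ x := hq
    subst hq
    rfl
  have h1 := hs.2 A hA
  have h2 := hs.2 B hB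
  let mid : Q0 → ℕ := fun i =>
    Module.finrank k ((W i).map (LinearMap.snd k (U i) (M.V i ⧸ U i)))
  have h3 : QRep.pair θ (((M.subRep U hU).dsum (M.quotRep U hU)).subDim W0) =
      QRep.pair θ (M.subDim A) + QRep.pair θ mid := by
    apply pair_add
    intro i
    have e1 := finrank_split (W i)
    have e2 : M.subDim A i = _ := Submodule.finrank_map_subtype_eq (U i)
      ((W i).comap (LinearMap.inl k (U i) (M.V i ⧸ U i)))
    rw [e2]
    exact e1
  have h4 : QRep.pair θ (M.subDim B) = QRep.pair θ mid + QRep.pair θ (M.subDim U) := by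
    apply pair_add
    intro i
    let Y := (W i).map (LinearMap.snd k (U i) (M.V i ⧸ U i))
    have e := (LinearMap.quotKerEquivOfSurjective (Y.mkQ ∘ₗ (U i).mkQ)
      ((Submodule.mkQ_surjective _).comp (Submodule.mkQ_surjective _))).finrank_eq
    rw [LinearMap.ker_comp, Submodule.ker_mkQ] at e
    have e1 := Submodule.finrank_quotient_add_finrank (Y.comap (U i).mkQ)
    have e2 := Submodule.finrank_quotient_add_finrank Y
    have e3 := Submodule.finrank_quotient_add_finrank (U i)
    have e4 : M.subDim B i = Module.finrank k (Y.comap (U i).mkQ) := rfl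
    have e5 : mid i = Module.finrank k Y := rfl
    have e6 : M.subDim U i = Module.finrank k (U i) := rfl
    omega
  rw [h3]
  linarith

lemma endpoint (d : Q0 → ℕ) (θ η : Q0 → ℝ) (hg : GITEquiv k s t d θ η)
    (M : QRep k s t) (hM : M.dimVec = d) (U : ∀ i, Submodule k (M.V i)) (hU : M.IsSubrep U)
    (hs : QRep.Semistable θ M) (h0 : QRep.pair θ (M.subDim U) = 0) :
    QRep.pair η (M.subDim U) = 0 := by
  obtain ⟨h1, h2⟩ := split_ss θ M U hU hs h0
  have hη := (hg M hM).1 hs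
  have h3 := (hg _ (h1.trans hM)).1 h2
  refine le_antisymm (hη.2 U hU) ?_
  let W : ∀ i, Submodule k (U i × (M.V i ⧸ U i)) := fun i => Submodule.prod ⊥ ⊤
  have h4 := h3.2 W (by
    rintro a ⟨x, y⟩ ⟨hx, -⟩
    refine ⟨?_, trivial⟩
    have hx : x = 0 := hx
    subst hx
    exact map_zero ((M.subRep U hU).hom a))
  have h5 : QRep.pair η M.dimVec = QRep.pair η (M.subDim U) +
      QRep.pair η (((M.subRep U hU).dsum (M.quotRep U hU)).subDim W) := by
    apply pair_add
    intro i
    have e1 := finrank_split (W i)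
    have e2 : (W i).comap (LinearMap.inl k (U i) (M.V i ⧸ U i)) = ⊥ := by
      ext x; simp [W]
    have e3 : (W i).map (LinearMap.snd k (U i) (M.V i ⧸ U i)) = ⊤ := by
      rw [eq_top_iff]
      intro y _
      exact ⟨(0, y), by simp [W], rfl⟩
    rw [e2, e3, finrank_bot, finrank_top] at e1
    have e4 := Submodule.finrank_quotient_add_finrank (U i)
    have e5 : ((M.subRep U hU).dsum (M.quotRep U hU)).subDim W i = Module.finrank k (W i) := rfl
    have e6 : M.subDim U i = Module.finrank k (U i) := rfl
    have e7 : M.dimVec i = Module.finrank k (M.V i) := rfl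
    omega
  rw [hη.1] at h5
  linarith

lemma ss_comb (θ η : Q0 → ℝ) (a b : ℝ) (ha : 0 ≤ a) (hb : 0 ≤ b) (M : QRep k s t)
    (h1 : QRep.Semistable θ M) (h2 : QRep.Semistable η M) :
    QRep.Semistable (a • θ + b • η) M := by
  refine ⟨by rw [pair_comb, h1.1, h2.1]; simp, fun U hU => ?_⟩
  rw [pair_comb]
  have := mul_nonpos_of_nonneg_of_nonpos ha (h1.2 U hU)
  have := mul_nonpos_of_nonneg_of_nonpos hb (h2.2 U hU)
  linarith

/-- One half of the easy direction. -/
lemma easy (d : Q0 → ℕ) (θ η : Q0 → ℝ) (hηd : QRep.pair η d = 0)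
    (h : ∀ e : Q0 → ℕ, e ≤ d → e ≠ 0 → e ≠ d →
        segment ℝ θ η ⊆ Wall k s t d e ∨ segment ℝ θ η ∩ Wall k s t d e = ∅)
    (M : QRep k s t) (hM : M.dimVec = d) (hs : QRep.Semistable θ M) : QRep.Semistable η M := by
  classical
  refine ⟨by rw [hM]; exact hηd, ?_⟩
  by_contra! hcon
  obtain ⟨U0, hU0, hU0p⟩ := hcon
  let A : Set (Q0 → ℕ) := {e | ∃ U, M.IsSubrep U ∧ M.subDim U = e ∧ 0 < QRep.pair η e}
  have hAd : ∀ e ∈ A, e ≤ d := by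
    rintro _ ⟨U, -, rfl, -⟩ i
    rw [← hM]
    exact Submodule.finrank_le _
  have hA : A.Finite := (Set.finite_Iic d).subset hAd
  obtain ⟨e, ⟨U, hU, hUe, hpos⟩, hmin⟩ := Set.exists_min_image A
    (fun e => -QRep.pair θ e / (QRep.pair η e - QRep.pair θ e)) hA ⟨_, U0, hU0, rfl, hU0p⟩
  have hle : e ≤ d := hAd e ⟨U, hU, hUe, hpos⟩
  have hθe : QRep.pair θ e ≤ 0 := by rw [← hUe]; exact hs.2 U hU
  set τ := -QRep.pair θ e / (QRep.pair η e - QRep.pair θ e) with hτ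
  have hden : 0 < QRep.pair η e - QRep.pair θ e := by linarith
  have hτ0 : 0 ≤ τ := div_nonneg (by linarith) hden.le
  have hτ1 : τ ≤ 1 := by rw [hτ, div_le_one hden]; linarith
  have hτe : τ * (QRep.pair η e - QRep.pair θ e) = -QRep.pair θ e := by
    rw [hτ]; field_simp
  have hθd : QRep.pair θ d = 0 := by rw [← hM]; exact hs.1
  have hseg : (1 - τ) • θ + τ • η ∈ segment ℝ θ η :=
    ⟨1 - τ, τ, by linarith, hτ0, by ring, rfl⟩
  have hw : (1 - τ) • θ + τ • η ∈ Wall k s t d e := by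
    refine ⟨?_, ?_, M, U, hM, hU, hUe, ?_, ?_⟩
    · rw [pair_comb, hθd, hηd]; simp
    · rw [pair_comb]; linarith
    · rw [hM, pair_comb, hθd, hηd]; simp
    · intro U' hU'
      rw [pair_comb]
      have h1 := hs.2 U' hU'
      rcases le_or_gt (QRep.pair η (M.subDim U')) 0 with h2 | h2
      · have := mul_nonpos_of_nonneg_of_nonpos hτ0 h2
        have := mul_nonpos_of_nonneg_of_nonpos (by linarith : 0 ≤ 1 - τ) h1
        linarith
      · have h3 := hmin _ ⟨U', hU', rfl, h2⟩
        have h3 : τ ≤ _ := h3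
        rw [le_div_iff₀ (by linarith)] at h3
        linarith
  rcases h e hle (by
    rintro rfl
    simp [QRep.pair] at hpos) (by
    rintro rfl
    linarith) with h1 | h1
  · have := (h1 (right_mem_segment ℝ θ η)).2.1
    linarith
  · have : (1 - τ) • θ + τ • η ∈ segment ℝ θ η ∩ Wall k s t d e := ⟨hseg, hw⟩
    rw [h1] at this
    exact this

end dsum

end GITW

/-- `θ, η` in the semistable cone of `d` are GIT equivalent iff for every
nonzero proper subdimension vector `e` of `d`, the segment `[θ, η]` is contained in `W_e`
or does not meet `W_e`. -/
theorem stmt11 (k : Type) [Field k] {Q0 Q1 : Type} [Fintype Q0] (s t : Q1 → Q0)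
    (d : Q0 → ℕ) (θ η : Q0 → ℝ)
    (hθ : θ ∈ SstCone k s t d) (hη : η ∈ SstCone k s t d) :
    GITEquiv k s t d θ η ↔
      ∀ e : Q0 → ℕ, e ≤ d → e ≠ 0 → e ≠ d →
        segment ℝ θ η ⊆ Wall k s t d e ∨ segment ℝ θ η ∩ Wall k s t d e = ∅ := by
  constructor
  · intro hg e _ _ _
    by_cases hne : segment ℝ θ η ∩ Wall k s t d e = ∅
    · exact Or.inr hne
    left
    obtain ⟨ζ, ⟨a, b, ha, hb, hab, rfl⟩, -, hζe, M, U, hM, hU, hUe, hs⟩ :=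
      Set.nonempty_iff_ne_empty.2 hne
    have hg' : GITEquiv k s t d η θ := fun M hM => (hg M hM).symm
    have key : QRep.Semistable θ M ∧ QRep.Semistable η M ∧ QRep.pair θ e = 0 ∧
        QRep.pair η e = 0 := by
      rcases ha.eq_or_lt with ha0 | ha0
      · subst ha0
        have hb1 : b = 1 := by linarith
        subst hb1
        rw [zero_smul, one_smul, zero_add] at hζe hs
        refine ⟨(hg M hM).2 hs, hs, ?_, hζe⟩
        rw [← hUe] at hζe ⊢
        exact GITW.endpoint d η θ hg' M hM U hU hs hζe
      rcases hb.eq_or_lt with hb0 | hb0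
      · subst hb0
        have ha1 : a = 1 := by linarith
        subst ha1
        rw [zero_smul, one_smul, add_zero] at hζe hs
        refine ⟨hs, (hg M hM).1 hs, hζe, ?_⟩
        rw [← hUe] at hζe ⊢
        exact GITW.endpoint d θ η hg M hM U hU hs hζe
      have h1 := GITW.git_convex d θ η hθ hη hg a b ha0 hb0 M hM hs
      have h0 : QRep.pair θ e = 0 := by
        rw [GITW.pair_comb] at hζe
        have h2 := h1.2 U hU
        have h3 := ((hg M hM).1 h1).2 U hU
        rw [hUe] at h2 h3
        by_contra hne
        have h4 := mul_neg_of_pos_of_neg ha0 (lt_of_le_of_ne h2 hne)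
        have h5 := mul_nonpos_of_nonneg_of_nonpos hb h3
        linarith
      refine ⟨h1, (hg M hM).1 h1, h0, ?_⟩
      rw [← hUe] at h0 ⊢
      exact GITW.endpoint d θ η hg M hM U hU h1 h0
    obtain ⟨k1, k2, k3, k4⟩ := key
    rintro _ ⟨a', b', ha', hb', -, rfl⟩
    refine ⟨?_, ?_, M, U, hM, hU, hUe, GITW.ss_comb θ η a' b' ha' hb' M k1 k2⟩
    · rw [GITW.pair_comb, hθ.1, hη.1]; simp
    · rw [GITW.pair_comb, k3, k4]; simp
  · intro h M hM
    refine ⟨GITW.easy d θ η hη.1 h M hM, GITW.easy d η θ hθ.1 ?_ M hM⟩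
    intro e h1 h2 h3
    rw [segment_symm]
    exact h e h1 h2 h3
end

section
/- If d is not a Schur root of Q (i.e. a general representation of dimension vector d is decomposable), then there exists a nonzero proper subdimension vector e of d such that W_e = Cone(d). -/
open scoped BigOperators

section Aux

/-- Matrix form of a subrepresentation of dimension vector `e` over a commutative ring. -/
def SubW {R Q0 Q1 : Type} [CommRing R] (s t : Q1 → Q0) (d e : Q0 → ℕ)
    (m : ∀ a : Q1, Matrix (Fin (d (t a))) (Fin (d (s a))) R)
    (u : ∀ i, Matrix (Fin (d i)) (Fin (e i)) R) (v : ∀ i, Matrix (Fin (e i)) (Fin (d i)) R) :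
    Prop :=
  (∀ i, v i * u i = 1) ∧ ∀ a, m a * u (s a) = u (t a) * (v (t a) * m a * u (s a))

lemma SubW.map {R S Q0 Q1 : Type} [CommRing R] [CommRing S] {s t : Q1 → Q0} {d e : Q0 → ℕ}
    {m : ∀ a : Q1, Matrix (Fin (d (t a))) (Fin (d (s a))) R}
    {u : ∀ i, Matrix (Fin (d i)) (Fin (e i)) R} {v : ∀ i, Matrix (Fin (e i)) (Fin (d i)) R}
    (h : SubW s t d e m u v) (f : R →+* S) :
    SubW s t d e (fun a => (m a).map f) (fun i => (u i).map f) (fun i => (v i).map f) := by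
  refine ⟨fun i => ?_, fun a => ?_⟩
  · rw [← Matrix.map_mul, h.1 i, Matrix.map_one _ f.map_zero f.map_one]
  · simp only [← Matrix.map_mul]
    rw [h.2 a]

lemma SubW.of_map {R S Q0 Q1 : Type} [CommRing R] [CommRing S] {s t : Q1 → Q0} {d e : Q0 → ℕ}
    {m : ∀ a : Q1, Matrix (Fin (d (t a))) (Fin (d (s a))) R}
    {u : ∀ i, Matrix (Fin (d i)) (Fin (e i)) R} {v : ∀ i, Matrix (Fin (e i)) (Fin (d i)) R}
    (f : R →+* S) (hf : Function.Injective f)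
    (h : SubW s t d e (fun a => (m a).map f) (fun i => (u i).map f) (fun i => (v i).map f)) :
    SubW s t d e m u v := by
  refine ⟨fun i => ?_, fun a => ?_⟩
  · apply Matrix.map_injective hf
    change (v i * u i).map f = (1 : Matrix _ _ R).map f
    rw [Matrix.map_mul, h.1 i, Matrix.map_one _ f.map_zero f.map_one]
  · apply Matrix.map_injective hf
    simp only [Matrix.map_mul]
    exact h.2 a

lemma exists_algHom_of_ft (k S : Type) [Field k] [IsAlgClosed k] [CommRing S] [Nontrivial S]
    [Algebra k S] [Algebra.FiniteType k S] : Nonempty (S →ₐ[k] k) := by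
  obtain ⟨I, hI⟩ := Ideal.exists_maximal S
  let _ : Field (S ⧸ I) := Ideal.Quotient.field I
  have : Algebra.FiniteType k (S ⧸ I) := inferInstance
  have := finite_of_finite_type_of_isJacobsonRing k (S ⧸ I)
  have hb := IsAlgClosed.algebraMap_bijective_of_isIntegral (k := k) (K := S ⧸ I)
  let E : k ≃ₐ[k] (S ⧸ I) := AlgEquiv.ofBijective (Algebra.ofId k (S ⧸ I)) hb
  exact ⟨(E.symm : (S ⧸ I) →ₐ[k] k).comp (Ideal.Quotient.mkₐ k I)⟩

lemma SubW.descend {k L Q0 Q1 : Type} [Field k] [IsAlgClosed k] [Field L] [Fintype Q0]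
    {s t : Q1 → Q0} {d e : Q0 → ℕ} (g : k →+* L)
    {m : ∀ a : Q1, Matrix (Fin (d (t a))) (Fin (d (s a))) k}
    {u : ∀ i, Matrix (Fin (d i)) (Fin (e i)) L} {v : ∀ i, Matrix (Fin (e i)) (Fin (d i)) L}
    (h : SubW s t d e (fun a => (m a).map g) u v) :
    ∃ u' v', SubW s t d e m u' v' := by
  let _ : Algebra k L := g.toAlgebra
  let T : Set L := Set.range (fun x : Σ i, Fin (d i) × Fin (e i) => u x.1 x.2.1 x.2.2) ∪
    Set.range (fun x : Σ i, Fin (e i) × Fin (d i) => v x.1 x.2.1 x.2.2)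
  have hT : T.Finite := (Set.finite_range _).union (Set.finite_range _)
  let S := Algebra.adjoin k T
  have : Algebra.FiniteType k S := by
    rw [← Subalgebra.fg_iff_finiteType]
    exact ⟨hT.toFinset, by simp [S]⟩
  obtain ⟨π⟩ := exists_algHom_of_ft k S
  let uS : ∀ i, Matrix (Fin (d i)) (Fin (e i)) S := fun i => Matrix.of fun x y =>
    ⟨u i x y, Algebra.subset_adjoin (Or.inl ⟨⟨i, x, y⟩, rfl⟩)⟩
  let vS : ∀ i, Matrix (Fin (e i)) (Fin (d i)) S := fun i => Matrix.of fun x y =>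
    ⟨v i x y, Algebra.subset_adjoin (Or.inr ⟨⟨i, x, y⟩, rfl⟩)⟩
  have hS : SubW s t d e (fun a => (m a).map (algebraMap k S)) uS vS := by
    apply SubW.of_map (S.subtype : S →+* L) Subtype.val_injective
    exact h
  have h2 := hS.map (π : S →+* k)
  have h3 : (fun a => ((m a).map (algebraMap k S)).map (π : S →+* k)) = m := by
    funext a; ext x y; simp
  rw [h3] at h2
  exact ⟨_, _, h2⟩

lemma exists_minor {K : Type} [Field K] {n r : ℕ} (u : Matrix (Fin n) (Fin r) K)
    (v : Matrix (Fin r) (Fin n) K) (h : v * u = 1) :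
    ∃ f : Fin r → Fin n, (u.submatrix f id).det ≠ 0 := by
  by_contra hc
  push Not at hc
  have h1 : (v * u).det = 0 := by
    have : (v * u) = fun i => ∑ j, v i j • u j := by
      funext i j
      simp [Matrix.mul_apply, Finset.sum_apply]
    rw [this]
    change Matrix.detRowAlternating.toMultilinearMap _ = 0
    rw [MultilinearMap.map_sum]
    refine Finset.sum_eq_zero fun f _ => ?_
    rw [MultilinearMap.map_smul_univ]
    have := hc f
    change _ • (u.submatrix f id).det = 0
    rw [this, smul_zero]
  rw [h] at h1
  simp at h1

lemma normalize_minor {K : Type} [Field K] (V : ValuationSubring K) {n r : ℕ}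
    (u : Matrix (Fin n) (Fin r) K) (v : Matrix (Fin r) (Fin n) K) (h : v * u = 1) :
    ∃ (g g' : Matrix (Fin r) (Fin r) K) (f : Fin r → Fin n), g * g' = 1 ∧
      (∀ i j, (u * g) i j ∈ V) ∧ (u * g).submatrix f id = 1 := by
  obtain ⟨f0, hf0⟩ := exists_minor u v h
  have : Nonempty (Fin r → Fin n) := ⟨f0⟩
  obtain ⟨f, hf⟩ := Finite.exists_max (fun f : Fin r → Fin n => V.valuation (u.submatrix f id).det)
  have hne : (u.submatrix f id).det ≠ 0 := by
    intro h0
    have := hf f0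
    rw [h0, map_zero, le_zero_iff, map_eq_zero] at this
    exact hf0 this
  have hu : IsUnit (u.submatrix f id).det := hne.isUnit
  refine ⟨(u.submatrix f id)⁻¹, u.submatrix f id, f, Matrix.nonsing_inv_mul _ hu, ?_, ?_⟩
  · intro i j
    have key : (u * (u.submatrix f id)⁻¹) i j =
        (u.submatrix f id).det⁻¹ * (u.submatrix (Function.update f j i) id).det := by
      have h1 : (u.submatrix (Function.update f j i) id) = (u.submatrix f id).updateRow j (u i) := by
        ext a b
        by_cases hab : a = j
        · subst hab; simp
        · simp [hab]
      rw [h1, ← Matrix.cramer_transpose_apply, Matrix.cramer_eq_adjugate_mulVec,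
        Matrix.inv_def, Ring.inverse_eq_inv', Matrix.mul_smul, Matrix.smul_apply, smul_eq_mul,
        ← Matrix.adjugate_transpose, Matrix.mulVec_transpose]
      rfl
    rw [key, ← V.valuation_le_one_iff, map_mul, map_inv₀]
    have hpos : V.valuation (u.submatrix f id).det ≠ 0 := by simpa using hne
    calc _ ≤ (V.valuation (u.submatrix f id).det)⁻¹ * V.valuation (u.submatrix f id).det :=
          mul_le_mul_right (hf _) _
      _ = 1 := inv_mul_cancel₀ hpos
  · have : (u * (u.submatrix f id)⁻¹).submatrix f id = u.submatrix f id * (u.submatrix f id)⁻¹ := by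
      ext a b; simp [Matrix.mul_apply]
    rw [this, Matrix.mul_nonsing_inv _ hu]

lemma exists_place {A K k : Type} [CommRing A] [Field K] [Field k] (φ : A →+* K) (ψ : A →+* k)
    (hφ : Function.Injective φ) : ∃ V : ValuationSubring K, (∀ a, φ a ∈ V) ∧
      ∀ a, ψ a = 0 → φ a ∈ V.nonunits := by
  have hI : (RingHom.ker ψ).map φ.rangeRestrict ≠ ⊤ := by
    rw [Ne, Ideal.eq_top_iff_one, Ideal.mem_map_iff_of_surjective _ φ.rangeRestrict_surjective]
    rintro ⟨a, ha, h1⟩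
    have h2 : φ a = φ 1 := by simpa using congrArg Subtype.val h1
    have := hφ h2
    subst this
    simp [RingHom.mem_ker] at ha
  obtain ⟨V, hV, hV2⟩ := Ideal.image_subset_nonunits_valuationSubring _ hI
  refine ⟨V, fun a => hV ⟨a, rfl⟩, fun a ha => hV2 ⟨φ.rangeRestrict a, ?_, rfl⟩⟩
  exact Ideal.mem_map_of_mem _ ha

/-- Specialization: a subrepresentation of the generic point gives one at every point. -/
lemma SubW.specialize {A K k Q0 Q1 : Type} [CommRing A] [Field K] [Field k] [IsAlgClosed k]
    [Fintype Q0] [Algebra k A] (φ : A →+* K) (ψ : A →ₐ[k] k)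
    (hφ : Function.Injective φ) {s t : Q1 → Q0} {d e : Q0 → ℕ}
    (m : ∀ a : Q1, Matrix (Fin (d (t a))) (Fin (d (s a))) A)
    {u : ∀ i, Matrix (Fin (d i)) (Fin (e i)) K} {v : ∀ i, Matrix (Fin (e i)) (Fin (d i)) K}
    (h : SubW s t d e (fun a => (m a).map φ) u v) :
    ∃ u' v', SubW s t d e (fun a => (m a).map ψ) u' v' := by
  obtain ⟨V, hV, hV0⟩ := exists_place φ (ψ : A →+* k) hφ
  choose g g' f hg hmem hone using fun i => normalize_minor V (u i) (v i) (h.1 i)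
  let φV : A →+* V := φ.codRestrict V.toSubring hV
  let uV : ∀ i, Matrix (Fin (d i)) (Fin (e i)) V := fun i => Matrix.of fun x y =>
    ⟨(u i * g i) x y, hmem i x y⟩
  let vV : ∀ i, Matrix (Fin (e i)) (Fin (d i)) V := fun i =>
    (1 : Matrix (Fin (d i)) (Fin (d i)) V).submatrix (f i) id
  have huV : ∀ i, (uV i).map V.subtype = u i * g i := fun i => by ext; rfl
  have hvV : ∀ i, (vV i).map V.subtype =
      (1 : Matrix (Fin (d i)) (Fin (d i)) K).submatrix (f i) id := fun i => by
    ext x y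
    simp [vV, Matrix.one_apply, apply_ite]
  have hvu : ∀ i, (1 : Matrix (Fin (d i)) (Fin (d i)) K).submatrix (f i) id * (u i * g i) = 1 := by
    intro i
    rw [← hone i]
    ext x y
    simp [Matrix.mul_apply, Matrix.one_apply]
  have hsub : SubW s t d e (fun a => (m a).map φV) uV vV := by
    apply SubW.of_map V.subtype Subtype.val_injective
    refine ⟨fun i => ?_, fun a => ?_⟩
    · simp only [huV, hvV, hvu]
    · have hm : ((m a).map φV).map V.subtype = (m a).map φ := by ext; rfl
      simp only [huV, hvV, hm]
      set M := (m a).map φ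
      have h1 : M * (u (s a) * g (s a)) = (u (t a) * g (t a)) *
          (g' (t a) * (v (t a) * M * u (s a)) * g (s a)) := by
        have h2 : M * u (s a) = u (t a) * (v (t a) * M * u (s a)) := h.2 a
        have h3 : u (t a) = u (t a) * (g (t a) * g' (t a)) := by rw [hg, Matrix.mul_one]
        rw [← Matrix.mul_assoc, h2]
        conv_lhs => rw [h3]
        simp only [Matrix.mul_assoc]
      rw [Matrix.mul_assoc ((1 : Matrix _ _ K).submatrix _ _), h1,
        ← Matrix.mul_assoc ((1 : Matrix _ _ K).submatrix _ _), hvu, Matrix.one_mul]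
  have hres := hsub.map (IsLocalRing.residue V)
  let γ : k →+* IsLocalRing.ResidueField V :=
    (IsLocalRing.residue V).comp (φV.comp (algebraMap k A))
  have hγ : (fun a => ((m a).map φV).map (IsLocalRing.residue V)) =
      fun a => ((m a).map ψ).map γ := by
    funext a
    ext x y
    simp only [Matrix.map_apply, γ, RingHom.comp_apply]
    rw [← sub_eq_zero, ← map_sub, ← map_sub, IsLocalRing.residue_eq_zero_iff]
    have := hV0 (m a x y - algebraMap k A (ψ (m a x y))) (by simp)
    rw [← SetLike.mem_coe, ← V.image_maximalIdeal] at this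
    obtain ⟨z, hz, hz2⟩ := this
    convert hz
    exact Subtype.ext hz2.symm
  rw [hγ] at hres
  exact hres.descend γ


lemma SubW.ofSub {k Q0 Q1 : Type} [Field k] {s t : Q1 → Q0} {d e : Q0 → ℕ}
    {m : ∀ a : Q1, Matrix (Fin (d (t a))) (Fin (d (s a))) k}
    (U : ∀ i, Submodule k (Fin (d i) → k))
    (hU : ∀ a, ∀ x ∈ U (s a), (m a).mulVecLin x ∈ U (t a))
    (he : ∀ i, Module.finrank k (U i) = e i) : ∃ u v, SubW s t d e m u v := by
  let b : ∀ i, Module.Basis (Fin (e i)) k (U i) := fun i => Module.finBasisOfFinrankEq k (U i) (he i)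
  let L : ∀ i, (Fin (e i) → k) →ₗ[k] (Fin (d i) → k) := fun i =>
    (U i).subtype ∘ₗ (b i).equivFun.symm.toLinearMap
  have hL : ∀ i, LinearMap.ker (L i) = ⊥ := fun i => by
    rw [LinearMap.ker_eq_bot]
    exact Subtype.val_injective.comp (b i).equivFun.symm.injective
  choose R hR using fun i => LinearMap.exists_leftInverse_of_injective (L i) (hL i)
  have hRL : ∀ i x, x ∈ U i → L i (R i x) = x := by
    intro i x hx
    have h1 : L i ((b i).equivFun ⟨x, hx⟩) = x := by simp [L]
    have h2 := LinearMap.congr_fun (hR i) ((b i).equivFun ⟨x, hx⟩)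
    simp only [LinearMap.comp_apply, LinearMap.id_apply, h1] at h2
    rw [h2, h1]
  refine ⟨fun i => LinearMap.toMatrix' (L i), fun i => LinearMap.toMatrix' (R i),
    fun i => ?_, fun a => ?_⟩
  · rw [← LinearMap.toMatrix'_comp, hR, LinearMap.toMatrix'_id]
  · apply Matrix.toLin'.injective
    apply LinearMap.ext
    intro w
    simp only [Matrix.toLin'_mul, LinearMap.comp_apply, Matrix.toLin'_toMatrix']
    refine (hRL _ _ (hU a _ ?_)).symm
    exact ((b (s a)).equivFun.symm w).2

lemma SubW.toSub {k Q0 Q1 : Type} [Field k] {s t : Q1 → Q0} {d e : Q0 → ℕ}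
    {m : ∀ a : Q1, Matrix (Fin (d (t a))) (Fin (d (s a))) k} {u v}
    (h : SubW s t d e m u v) : ∃ U : ∀ i, Submodule k (Fin (d i) → k),
    (∀ a, ∀ x ∈ U (s a), (m a).mulVecLin x ∈ U (t a)) ∧
    (∀ i, Module.finrank k (U i) = e i) := by
  refine ⟨fun i => LinearMap.range (u i).mulVecLin, ?_, ?_⟩
  · rintro a _ ⟨w, rfl⟩
    refine ⟨((v (t a) * m a * u (s a))).mulVec w, ?_⟩
    simp only [Matrix.mulVecLin_apply, Matrix.mulVec_mulVec]
    rw [h.2 a]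
  · intro i
    rw [LinearMap.finrank_range_of_inj]
    · simp
    · apply Function.LeftInverse.injective (g := (v i).mulVec)
      intro w
      simp [Matrix.mulVec_mulVec, h.1 i]

lemma germ_map_eq {X k n p : Type} [Field k] (F : Ultrafilter X) {A B : Matrix n p (X → k)}
    (h : ∀ᶠ x in (F : Filter X), A.map (Pi.evalRingHom (fun _ => k) x) =
      B.map (Pi.evalRingHom (fun _ => k) x)) :
    A.map (Filter.Germ.coeRingHom (F : Filter X)) = B.map (Filter.Germ.coeRingHom (F : Filter X)) := by
  ext i j
  refine Filter.Germ.coe_eq.mpr (h.mono fun x hx => ?_)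
  exact congrFun (congrFun hx i) j

lemma SubW.generic {k Q0 Q1 : Type} [Field k] [IsAlgClosed k] [Fintype Q0] {s t : Q1 → Q0}
    {d e : Q0 → ℕ}
    (F : Ultrafilter (∀ a : Q1, Matrix (Fin (d (t a))) (Fin (d (s a))) k))
    (hF : ∀ p : MvPolynomial (RepCoords s t d) k, p ≠ 0 →
      ∀ᶠ m in (F : Filter (∀ a : Q1, Matrix (Fin (d (t a))) (Fin (d (s a))) k)), MvPolynomial.eval (fun x => m x.1 x.2.1 x.2.2) p ≠ 0)
    (hS : ∀ᶠ m in (F : Filter (∀ a : Q1, Matrix (Fin (d (t a))) (Fin (d (s a))) k)), ∃ u v, SubW s t d e m u v)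
    (m0 : ∀ a : Q1, Matrix (Fin (d (t a))) (Fin (d (s a))) k) :
    ∃ u v, SubW s t d e m0 u v := by
  have hch : ∀ m : (∀ a : Q1, Matrix (Fin (d (t a))) (Fin (d (s a))) k),
      ∃ (u : ∀ i, Matrix (Fin (d i)) (Fin (e i)) k) (v : ∀ i, Matrix (Fin (e i)) (Fin (d i)) k),
      (∃ u v, SubW s t d e m u v) → SubW s t d e m u v := by
    intro m
    by_cases h : ∃ u v, SubW s t d e m u v
    · obtain ⟨u, v, h'⟩ := h
      exact ⟨u, v, fun _ => h'⟩
    · exact ⟨fun _ => 0, fun _ => 0, fun h' => absurd h' h⟩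
  choose u v huv using hch
  let X := ∀ a : Q1, Matrix (Fin (d (t a))) (Fin (d (s a))) k
  let C : (X → k) →+* Filter.Germ (F : Filter X) k := Filter.Germ.coeRingHom (F : Filter X)
  let E : MvPolynomial (RepCoords s t d) k →+* (X → k) := RingHom.pi fun m : X =>
    MvPolynomial.eval (fun x : RepCoords s t d => m x.1 x.2.1 x.2.2)
  let φ := C.comp E
  have hφ : Function.Injective φ := by
    rw [injective_iff_map_eq_zero]
    intro p hp
    by_contra hne
    have h1 : ∀ᶠ m in (F : Filter X),
        MvPolynomial.eval (fun x : RepCoords s t d => m x.1 x.2.1 x.2.2) p = 0 :=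
      Filter.Germ.coe_eq.mp hp
    obtain ⟨m, hm1, hm2⟩ := (h1.and (hF p hne)).exists
    exact hm2 hm1
  let ψ : MvPolynomial (RepCoords s t d) k →ₐ[k] k :=
    MvPolynomial.aeval (fun x : RepCoords s t d => m0 x.1 x.2.1 x.2.2)
  let mg : ∀ a : Q1, Matrix (Fin (d (t a))) (Fin (d (s a))) (MvPolynomial (RepCoords s t d) k) :=
    fun a => Matrix.of fun x y => MvPolynomial.X (⟨a, x, y⟩ : RepCoords s t d)
  let uB : ∀ i, Matrix (Fin (d i)) (Fin (e i)) (X → k) := fun i => Matrix.of fun x y m => u m i x y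
  let vB : ∀ i, Matrix (Fin (e i)) (Fin (d i)) (X → k) := fun i => Matrix.of fun x y m => v m i x y
  have hu : ∀ i (m : X), (uB i).map (Pi.evalRingHom (fun _ => k) m) = u m i := fun i m => rfl
  have hv : ∀ i (m : X), (vB i).map (Pi.evalRingHom (fun _ => k) m) = v m i := fun i m => rfl
  have hmg : ∀ a (m : X), ((mg a).map E).map (Pi.evalRingHom (fun _ => k) m) = m a := by
    intro a m
    ext x y
    exact MvPolynomial.eval_X (f := fun x : RepCoords s t d => m x.1 x.2.1 x.2.2) ⟨a, x, y⟩
  have hK : SubW s t d e (fun a => (mg a).map φ) (fun i => (uB i).map C) (fun i => (vB i).map C) := by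
    refine ⟨fun i => ?_, fun a => ?_⟩
    · rw [← Matrix.map_mul, ← Matrix.map_one C C.map_zero C.map_one]
      apply germ_map_eq
      filter_upwards [hS] with m hm
      rw [Matrix.map_mul, hu, hv, (huv m hm).1, Matrix.map_one _ (map_zero _) (map_one _)]
    · have : (mg a).map φ = ((mg a).map E).map C := rfl
      simp only [this, ← Matrix.map_mul]
      apply germ_map_eq
      filter_upwards [hS] with m hm
      simp only [Matrix.map_mul, hu, hv, hmg]
      exact (huv m hm).2 a
  have h0 := hK.specialize φ ψ hφ mg
  have hm0 : (fun a => (mg a).map ψ) = m0 := by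
    funext a
    ext x y
    exact MvPolynomial.aeval_X (fun x : RepCoords s t d => m0 x.1 x.2.1 x.2.2) ⟨a, x, y⟩
  rwa [hm0] at h0

lemma exists_dense_ultrafilter {k Q0 Q1 : Type} [Field k] {s t : Q1 → Q0} {d : Q0 → ℕ}
    (P : (∀ a : Q1, Matrix (Fin (d (t a))) (Fin (d (s a))) k) → Prop)
    (hP : ∀ p : MvPolynomial (RepCoords s t d) k, p ≠ 0 →
      ∃ m, MvPolynomial.eval (fun x => m x.1 x.2.1 x.2.2) p ≠ 0 ∧ P m) :
    ∃ F : Ultrafilter (∀ a : Q1, Matrix (Fin (d (t a))) (Fin (d (s a))) k),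
      (∀ p : MvPolynomial (RepCoords s t d) k, p ≠ 0 →
      ∀ᶠ m in (F : Filter (∀ a : Q1, Matrix (Fin (d (t a))) (Fin (d (s a))) k)), MvPolynomial.eval (fun x => m x.1 x.2.1 x.2.2) p ≠ 0) ∧
      ∀ᶠ m in (F : Filter (∀ a : Q1, Matrix (Fin (d (t a))) (Fin (d (s a))) k)), P m := by
  let X := ∀ a : Q1, Matrix (Fin (d (t a))) (Fin (d (s a))) k
  let D : {p : MvPolynomial (RepCoords s t d) k // p ≠ 0} → Set X := fun p =>
    {m | MvPolynomial.eval (fun x : RepCoords s t d => m x.1 x.2.1 x.2.2) p.1 ≠ 0 ∧ P m}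
  let G : Filter X := ⨅ p, Filter.principal (D p)
  have : Nonempty X := ⟨fun _ => 0⟩
  have hG : G.NeBot := by
    apply Filter.iInf_neBot_of_directed
    · intro p q
      refine ⟨⟨p.1 * q.1, mul_ne_zero p.2 q.2⟩, ?_, ?_⟩
      · apply Filter.principal_mono.mpr
        rintro m ⟨h1, h2⟩
        rw [map_mul] at h1
        exact ⟨left_ne_zero_of_mul h1, h2⟩
      · apply Filter.principal_mono.mpr
        rintro m ⟨h1, h2⟩
        rw [map_mul] at h1
        exact ⟨right_ne_zero_of_mul h1, h2⟩
    · intro p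
      rw [Filter.principal_neBot_iff]
      exact hP p.1 p.2
  have hD : ∀ p, D p ∈ Ultrafilter.of G := fun p =>
    Ultrafilter.of_le G (Filter.mem_iInf_of_mem p (Filter.mem_principal_self _))
  refine ⟨Ultrafilter.of G, fun p hp => ?_, ?_⟩
  · exact Filter.mem_of_superset (hD ⟨p, hp⟩) fun m hm => hm.1
  · exact Filter.mem_of_superset (hD ⟨1, one_ne_zero⟩) fun m hm => hm.2

lemma dimVec_matToRep {k Q0 Q1 : Type} [Field k] (s t : Q1 → Q0) (d : Q0 → ℕ)
    (m : ∀ a : Q1, Matrix (Fin (d (t a))) (Fin (d (s a))) k) :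
    (matToRep s t k d m).dimVec = d := by
  funext i
  exact Module.finrank_fin_fun k

/-- Every semistable representation can be put in matrix form. -/
lemma exists_matToRep_semistable {k Q0 Q1 : Type} [Field k] [Fintype Q0] {s t : Q1 → Q0}
    {d : Q0 → ℕ} {θ : Q0 → ℝ} (M : QRep k s t) (hM : M.dimVec = d) (hs : QRep.Semistable θ M) :
    ∃ m, QRep.Semistable θ (matToRep s t k d m) := by
  let b : ∀ i, Module.Basis (Fin (d i)) k (M.V i) := fun i =>
    Module.finBasisOfFinrankEq k (M.V i) (congrFun hM i)
  refine ⟨fun a => LinearMap.toMatrix (b (s a)) (b (t a)) (M.hom a), ?_, ?_⟩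
  · rw [dimVec_matToRep, ← hM]
    exact hs.1
  · intro U hU
    let E : ∀ i, (Fin (d i) → k) ≃ₗ[k] M.V i := fun i => (b i).equivFun.symm
    let U0 : ∀ i, Submodule k (Fin (d i) → k) := U
    have h := hs.2 (fun i => (U0 i).map (E i).toLinearMap) ?_
    · convert h using 2
      funext i
      exact ((E i).finrank_map_eq (U0 i)).symm
    · rintro a _ ⟨x, hx, rfl⟩
      refine ⟨_, hU a x hx, ?_⟩
      change (E (t a)) ((LinearMap.toMatrix (b (s a)) (b (t a)) (M.hom a)).mulVec x) =
        M.hom a (E (s a) x)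
      have h1 := LinearMap.toMatrix_mulVec_repr (b (s a)) (b (t a)) (M.hom a) (E (s a) x)
      have h2 : ((b (s a)).repr (E (s a) x) : Fin (d (s a)) → k) = x :=
        (b (s a)).equivFun.apply_symm_apply x
      rw [h2] at h1
      rw [h1]
      exact (b (t a)).equivFun.symm_apply_apply _

end Aux

/-- if `d ≠ 0` is not a Schur root, then there is a nonzero proper
subdimension vector `e` of `d` with `W_e = Cone(d)`. -/
theorem stmt13 (k : Type) [Field k] [IsAlgClosed k] [CharZero k]
    {Q0 Q1 : Type} [Fintype Q0] [Fintype Q1] (s t : Q1 → Q0)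
    (d : Q0 → ℕ) (hd0 : d ≠ 0) (hd : ¬ IsSchurRoot s t k d) :
    ∃ e : Q0 → ℕ, e ≤ d ∧ e ≠ 0 ∧ e ≠ d ∧ Wall k s t d e = SstCone k s t d := by
  classical
  obtain ⟨i0, hi0⟩ : ∃ i, d i ≠ 0 := by
    by_contra h
    push Not at h
    exact hd0 (funext h)
  let Dec : (e : Q0 → ℕ) → (∀ a : Q1, Matrix (Fin (d (t a))) (Fin (d (s a))) k) → Prop :=
    fun e m => ∃ U W : ∀ i, Submodule k ((matToRep s t k d m).V i),
      (matToRep s t k d m).IsSubrep U ∧ (matToRep s t k d m).IsSubrep W ∧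
        (∀ i, IsCompl (U i) (W i)) ∧ (matToRep s t k d m).subDim U = e
  have hfin : {e : Q0 → ℕ | e ≤ d}.Finite := Set.finite_Iic d
  have hfin' : {e : Q0 → ℕ | e ≤ d ∧ e ≠ 0 ∧ e ≠ d}.Finite := hfin.subset fun e he => he.1
  have hle : ∀ m (U : ∀ i, Submodule k ((matToRep s t k d m).V i)),
      (matToRep s t k d m).subDim U ≤ d := by
    intro m U i
    have h1 := Submodule.finrank_le (U i)
    exact h1.trans (congrFun (dimVec_matToRep s t d m) i).le
  have hadd : ∀ m (U W : ∀ i, Submodule k ((matToRep s t k d m).V i)),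
      (∀ i, IsCompl (U i) (W i)) → ∀ i, (matToRep s t k d m).subDim U i +
        (matToRep s t k d m).subDim W i = d i := by
    intro m U W h i
    exact (Submodule.finrank_add_eq_of_isCompl (h i)).trans
      (congrFun (dimVec_matToRep s t d m) i)
  have hbot : ∀ m (U : ∀ i, Submodule k ((matToRep s t k d m).V i)),
      U ≠ (fun _ => ⊥) → ∃ i, (matToRep s t k d m).subDim U i ≠ 0 := by
    intro m U hU
    by_contra hc
    push Not at hc
    exact hU (funext fun i => Submodule.finrank_eq_zero.mp (hc i))
  obtain ⟨F, hF, hFD⟩ := exists_dense_ultrafilter (k := k) (s := s) (t := t) (d := d)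
    (fun m => ∃ e ∈ {e : Q0 → ℕ | e ≤ d ∧ e ≠ 0 ∧ e ≠ d}, Dec e m) (by
      intro p hp
      by_contra hc
      push Not at hc
      refine hd ⟨p, hp, fun m hm => ⟨⟨i0, ?_⟩, ?_⟩⟩
      · intro h0
        exact hi0 ((congrFun (dimVec_matToRep s t d m) i0).symm.trans h0)
      · rintro ⟨U, W, hU, hW, hU0, hW0, hc'⟩
        refine hc m hm ((matToRep s t k d m).subDim U) ⟨hle m U, ?_, ?_⟩ ⟨U, W, hU, hW, hc', rfl⟩
        · obtain ⟨i, hi⟩ := hbot m U hU0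
          intro h
          exact hi (congrFun h i)
        · obtain ⟨i, hi⟩ := hbot m W hW0
          intro h
          have h1 := hadd m U W hc' i
          have h2 := congrFun h i
          omega)
  rw [Ultrafilter.eventually_exists_mem_iff hfin'] at hFD
  obtain ⟨e, ⟨he1, he2, he3⟩, hFe⟩ := hFD
  refine ⟨e, he1, he2, he3, Set.Subset.antisymm ?_ ?_⟩
  · rintro θ ⟨h1, -, M, U, hM, -, -, hs⟩
    exact ⟨h1, M, hM, hs⟩
  rintro θ ⟨hθ, M, hM, hs⟩
  obtain ⟨m0, hm0⟩ := exists_matToRep_semistable M hM hs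
  have hss : ∀ᶠ m in (F : Filter (∀ a : Q1, Matrix (Fin (d (t a))) (Fin (d (s a))) k)), QRep.Semistable θ (matToRep s t k d m) := by
    by_contra hc
    rw [← Ultrafilter.eventually_not] at hc
    have h1 : ∀ᶠ m in (F : Filter (∀ a : Q1, Matrix (Fin (d (t a))) (Fin (d (s a))) k)), ∃ e' ∈ {e' : Q0 → ℕ | e' ≤ d},
        0 < QRep.pair θ e' ∧ ∃ u v, SubW s t d e' m u v := by
      filter_upwards [hc] with m hm
      unfold QRep.Semistable at hm
      rw [dimVec_matToRep] at hm
      push Not at hm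
      obtain ⟨U, hU, hp⟩ := hm hθ
      exact ⟨_, hle m U, hp, SubW.ofSub (m := m) U hU fun i => rfl⟩
    rw [Ultrafilter.eventually_exists_mem_iff hfin] at h1
    obtain ⟨e', -, h2⟩ := h1
    obtain ⟨_, hpos, -⟩ := h2.exists
    obtain ⟨u, v, huv⟩ := SubW.generic F hF (h2.mono fun m hm => hm.2) m0
    obtain ⟨U, hU, hUe⟩ := huv.toSub
    have h3 := hm0.2 U hU
    have h4 : (matToRep s t k d m0).subDim U = e' := funext hUe
    rw [h4] at h3
    exact absurd hpos (not_lt.mpr h3)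
  obtain ⟨m, hm, U, W, hU, hW, hcompl, hUe⟩ := (hss.and hFe).exists
  have hUp := hm.2 U hU
  have hWp := hm.2 W hW
  have hsum : QRep.pair θ ((matToRep s t k d m).subDim U) +
      QRep.pair θ ((matToRep s t k d m).subDim W) = 0 := by
    rw [← hθ]
    unfold QRep.pair
    rw [← Finset.sum_add_distrib]
    refine Finset.sum_congr rfl fun i _ => ?_
    rw [← hadd m U W hcompl i]
    push_cast
    ring
  refine ⟨hθ, ?_, matToRep s t k d m, U, dimVec_matToRep s t d m, hU, hUe, hm⟩
  rw [← hUe]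
  linarith
end

section
/- Let d be a Schur root of Q. Then there exists an open ball B in {θ : θ·d = 0} around the canonical stability parameter θ_d such that for all η ∈ B and all proper nonzero generic subdimension vectors e ↪ d, one has η(e) < 0; consequently B is contained in the semistable cone of d, and the semistable cone spans the stability space. -/
open scoped BigOperators

/-- More polynomials than variables: algebraic dependence. -/
lemma exists_alg_rel (k : Type) [Field k] {σ τ : Type} [Fintype σ] [Fintype τ]
    (h : Fintype.card τ < Fintype.card σ) (P : σ → MvPolynomial τ k) :
    ∃ q : MvPolynomial σ k, q ≠ 0 ∧ MvPolynomial.aeval P q = 0 := by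
  by_contra hcon
  push Not at hcon
  have hind : AlgebraicIndependent k P := by
    rw [algebraicIndependent_iff]
    intro q hq
    by_contra hne
    exact hcon q hne hq
  have h1 := hind.cardinalMk_le_trdeg
  rw [MvPolynomial.trdeg_of_isDomain] at h1
  simp at h1
  omega

/-- Every subspace of `k^n` is a graph over a coordinate subspace. -/
lemma exists_chart (k : Type) [Field k] {n : ℕ} (U : Submodule k (Fin n → k)) :
    ∃ (J : Finset (Fin n)) (F : Fin n → Fin n → k), J.card = Module.finrank k U ∧
      (∀ v ∈ U, ∀ r, v r = ∑ c ∈ J, F r c * v c) ∧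
      (∀ c ∈ J, (fun r => F r c) ∈ U) ∧
      (∀ r ∈ J, ∀ c ∈ J, F r c = if r = c then 1 else 0) := by
  classical
  let v : Fin n → Module.Dual k U := fun i => (LinearMap.proj i).comp U.subtype
  obtain ⟨κ, a, ha, hsp, hli⟩ := exists_linearIndependent' k v
  have : Fintype κ := Fintype.ofInjective a ha
  have hcard : Fintype.card κ ≤ Module.finrank k U := by
    have := hli.fintype_card_le_finrank
    rwa [Subspace.dual_finrank_eq] at this
  -- the coordinate map is injective
  let T : U →ₗ[k] (κ → k) := LinearMap.pi (fun j => v (a j))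
  have hTinj : Function.Injective T := by
    rw [← LinearMap.ker_eq_bot, LinearMap.ker_eq_bot']
    intro u hu
    have h1 : ∀ f ∈ Submodule.span k (Set.range (v ∘ a)), f u = 0 := by
      intro f hf
      induction hf using Submodule.span_induction with
      | mem x hx => obtain ⟨j, rfl⟩ := hx; exact congrFun hu j
      | zero => rfl
      | add x y _ _ hx hy => simp [hx, hy]
      | smul c x _ hx => simp [hx]
    ext i
    exact h1 (v i) (by rw [hsp]; exact Submodule.subset_span ⟨i, rfl⟩)
  have hfr : Module.finrank k U = Module.finrank k (κ → k) := by
    apply le_antisymm (LinearMap.finrank_le_finrank_of_injective hTinj)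
    simpa using hcard
  let E : U ≃ₗ[k] (κ → k) := LinearEquiv.ofInjectiveOfFinrankEq T hTinj hfr
  have hE : ∀ u : U, ∀ j, E u j = (u : Fin n → k) (a j) := fun u j => rfl
  let G : κ → U := fun j => E.symm (Pi.single j 1)
  have hG : ∀ j j', (G j : Fin n → k) (a j') = if j' = j then 1 else 0 := by
    intro j j'
    rw [← hE]
    simp [G, Pi.single_apply]
  let F : Fin n → Fin n → k := fun r c => if h : ∃ j, a j = c then (G h.choose : Fin n → k) r else 0
  have hF : ∀ r j, F r (a j) = (G j : Fin n → k) r := by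
    intro r j
    have h : ∃ j', a j' = a j := ⟨j, rfl⟩
    have : h.choose = j := ha h.choose_spec
    simp only [F, dif_pos h, this]
  refine ⟨Finset.univ.map ⟨a, ha⟩, F, ?_, ?_, ?_, ?_⟩
  · simp [hfr]
  · intro u hu r
    rw [Finset.sum_map]
    simp only [Function.Embedding.coeFn_mk, hF]
    have h2 : (⟨u, hu⟩ : U) = ∑ j, u (a j) • G j := by
      apply E.injective
      rw [map_sum]
      ext j'
      simp [G, hE, Pi.single_apply]
    have h3 := congrArg (fun w : U => (w : Fin n → k) r) h2
    simp only [Submodule.coe_sum, Submodule.coe_smul, Finset.sum_apply, Pi.smul_apply,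
      smul_eq_mul] at h3
    rw [h3]
    exact Finset.sum_congr rfl fun j _ => mul_comm _ _
  · intro c hc
    simp at hc
    obtain ⟨j, rfl⟩ := hc
    simp only [hF]
    exact (G j).2
  · intro r hr c hc
    simp at hc hr
    obtain ⟨j, rfl⟩ := hc
    obtain ⟨j', rfl⟩ := hr
    rw [hF, hG]
    simp [ha.eq_iff]

section Count
variable {Q0 Q1 : Type} [Fintype Q0] [Fintype Q1] (s t : Q1 → Q0)

/-- If the chart `J` has too few parameters, representations with a subrepresentation in the
chart `J` lie in a hypersurface. -/
lemma exists_chart_poly (k : Type) [Field k] (d : Q0 → ℕ) (J : ∀ i, Finset (Fin (d i)))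
    (hJ : ∑ i, (J i).card * (d i - (J i).card) <
      ∑ a, (J (s a)).card * (d (t a) - (J (t a)).card)) :
    ∃ q : MvPolynomial (RepCoords s t d) k, q ≠ 0 ∧
      ∀ (m : ∀ a : Q1, Matrix (Fin (d (t a))) (Fin (d (s a))) k)
        (F : ∀ i, Fin (d i) → Fin (d i) → k),
        (∀ i, ∀ r ∈ J i, ∀ c ∈ J i, F i r c = if r = c then 1 else 0) →
        (∀ a, ∀ c ∈ J (s a), ∀ r, ∑ c', m a r c' * F (s a) c' c =
          ∑ r' ∈ J (t a), F (t a) r r' * ∑ c', m a r' c' * F (s a) c' c) →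
        MvPolynomial.eval (fun x => m x.1 x.2.1 x.2.2) q = 0 := by
  classical
  let _ : Fintype (RepCoords s t d) :=
    inferInstanceAs (Fintype (Σ a : Q1, Fin (d (t a)) × Fin (d (s a))))
  let τ1 : Type := Σ i, ↥(J i)ᶜ × ↥(J i)
  let bad : RepCoords s t d → Prop := fun x => x.2.1 ∉ J (t x.1) ∧ x.2.2 ∈ J (s x.1)
  let τ2 : Type := {x : RepCoords s t d // ¬ bad x}
  have hbadcard : Fintype.card {x : RepCoords s t d // bad x} =
      ∑ a, (J (s a)).card * (d (t a) - (J (t a)).card) := by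
    let e : {x : RepCoords s t d // bad x} ≃ Σ a, ↥(J (t a))ᶜ × ↥(J (s a)) :=
      { toFun := fun x => ⟨x.1.1, ⟨x.1.2.1, by simpa using x.2.1⟩, ⟨x.1.2.2, x.2.2⟩⟩
        invFun := fun y => ⟨⟨y.1, y.2.1.1, y.2.2.1⟩, Finset.mem_compl.1 y.2.1.2, y.2.2.2⟩
        left_inv := fun x => rfl
        right_inv := fun y => rfl }
    rw [Fintype.card_congr e, Fintype.card_sigma]
    refine Finset.sum_congr rfl fun a _ => ?_
    simp [mul_comm]
  have hcard : Fintype.card (τ1 ⊕ τ2) < Fintype.card (RepCoords s t d) := by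
    have h1 : Fintype.card τ1 = ∑ i, (J i).card * (d i - (J i).card) := by
      simp only [τ1]
      rw [Fintype.card_sigma]
      refine Finset.sum_congr rfl fun a _ => ?_
      simp [mul_comm]
    have h2 : Fintype.card {x : RepCoords s t d // bad x} + Fintype.card τ2 =
        Fintype.card (RepCoords s t d) := by
      have := Fintype.card_subtype_compl bad
      have h3 := Fintype.card_subtype_le bad
      simp only [τ2]
      omega
    rw [Fintype.card_sum]
    omega
  let fF : ∀ i, Fin (d i) → Fin (d i) → MvPolynomial (τ1 ⊕ τ2) k := fun i r c =>
    if h : r ∉ J i ∧ c ∈ J i then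
      MvPolynomial.X (Sum.inl ⟨i, ⟨r, by simpa using h.1⟩, ⟨c, h.2⟩⟩) else 0
  let fR : ∀ a, Fin (d (t a)) → Fin (d (s a)) → MvPolynomial (τ1 ⊕ τ2) k := fun a r c =>
    if h : ¬ bad ⟨a, r, c⟩ then MvPolynomial.X (Sum.inr ⟨⟨a, r, c⟩, h⟩) else 0
  let P : RepCoords s t d → MvPolynomial (τ1 ⊕ τ2) k := fun x =>
    if bad x then
      ∑ r' ∈ J (t x.1), fF _ x.2.1 r' * (fR x.1 r' x.2.2 +
        ∑ c' ∈ (J (s x.1))ᶜ, fR x.1 r' c' * fF _ c' x.2.2)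
      - ∑ c' ∈ (J (s x.1))ᶜ, fR x.1 x.2.1 c' * fF _ c' x.2.2
    else fR x.1 x.2.1 x.2.2
  obtain ⟨q, hq0, hq⟩ := exists_alg_rel k hcard P
  refine ⟨q, hq0, ?_⟩
  intro m F hF1 hF2
  let ev : τ1 ⊕ τ2 → k := Sum.elim (fun y => F y.1 y.2.1 y.2.2) (fun y => m y.1.1 y.1.2.1 y.1.2.2)
  have evF : ∀ i r c, r ∉ J i → c ∈ J i → MvPolynomial.eval ev (fF i r c) = F i r c := by
    intro i r c hr hc
    simp only [fF]
    rw [dif_pos ⟨hr, hc⟩]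
    simp [ev]
  have evR : ∀ a r c, ¬ (r ∉ J (t a) ∧ c ∈ J (s a)) →
      MvPolynomial.eval ev (fR a r c) = m a r c := by
    intro a r c h
    simp only [fR]
    rw [dif_pos (show ¬ bad ⟨a, r, c⟩ from h)]
    simp [ev]
  have hsplit : ∀ a, ∀ c ∈ J (s a), ∀ r, ∑ c', m a r c' * F (s a) c' c =
      m a r c + ∑ c' ∈ (J (s a))ᶜ, m a r c' * F (s a) c' c := by
    intro a c hc r
    rw [← Finset.sum_add_sum_compl (J (s a))]
    congr 1
    rw [Finset.sum_eq_single_of_mem c hc]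
    · rw [hF1 _ c hc c hc]; simp
    · intro b hb hbc
      rw [hF1 _ b hb c hc, if_neg hbc, mul_zero]
  have hP : ∀ x, MvPolynomial.eval ev (P x) = m x.1 x.2.1 x.2.2 := by
    rintro ⟨a, r, c⟩
    by_cases hb : bad ⟨a, r, c⟩
    · have hr : r ∉ J (t a) := hb.1
      have hc : c ∈ J (s a) := hb.2
      simp only [P, if_pos hb]
      have h := hF2 a c hc r
      rw [hsplit a c hc r] at h
      rw [map_sub, map_sum, map_sum, eq_comm, eq_sub_iff_add_eq]
      have e1 : ∀ r, ∑ c' ∈ (J (s a))ᶜ, MvPolynomial.eval ev (fR a r c' * fF _ c' c) =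
          ∑ c' ∈ (J (s a))ᶜ, m a r c' * F (s a) c' c := by
        intro r
        refine Finset.sum_congr rfl fun c' hc' => ?_
        have hc'' : c' ∉ J (s a) := by simpa using hc'
        rw [map_mul, evF _ _ _ hc'' hc, evR _ _ _ (fun h => hc'' h.2)]
      rw [e1, h]
      refine Finset.sum_congr rfl fun r' hr' => ?_
      rw [map_mul, evF _ _ _ hr hr', map_add, evR _ _ _ (fun h => h.1 hr'), map_sum, e1,
        hsplit a c hc r']
    · simp only [P, if_neg hb]
      exact evR _ _ _ hb
  have h0 : MvPolynomial.eval ev (MvPolynomial.aeval P q) = 0 := by rw [hq, map_zero]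
  rw [← h0]
  have : (fun x : RepCoords s t d => m x.1 x.2.1 x.2.2) =
      fun x => MvPolynomial.eval ev (P x) := by
    funext x; rw [hP]
  rw [this, MvPolynomial.aeval_def, MvPolynomial.eval₂_eq', map_sum]
  rw [MvPolynomial.eval_eq']
  refine Finset.sum_congr rfl fun x _ => ?_
  simp [MvPolynomial.algebraMap_eq]

/-- A generic polynomial whose nonvanishing forces `⟨β, d - β⟩ ≥ 0` for all subrepresentations. -/
lemma exists_generic_poly [DecidableEq Q0] (k : Type) [Field k] (d : Q0 → ℕ) :
    ∃ q : MvPolynomial (RepCoords s t d) k, q ≠ 0 ∧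
      ∀ m : ∀ a : Q1, Matrix (Fin (d (t a))) (Fin (d (s a))) k,
        MvPolynomial.eval (fun x => m x.1 x.2.1 x.2.2) q ≠ 0 →
        ∀ U : ∀ i, Submodule k (Fin (d i) → k),
          (∀ a, ∀ x ∈ U (s a), (m a).mulVec x ∈ U (t a)) →
          ∑ a, Module.finrank k (U (s a)) * (d (t a) - Module.finrank k (U (t a))) ≤
            ∑ i, Module.finrank k (U i) * (d i - Module.finrank k (U i)) := by
  classical
  have key : ∀ J : ∀ i, Finset (Fin (d i)), ∃ q : MvPolynomial (RepCoords s t d) k, q ≠ 0 ∧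
      (∑ i, (J i).card * (d i - (J i).card) <
        ∑ a, (J (s a)).card * (d (t a) - (J (t a)).card) →
      ∀ (m : ∀ a : Q1, Matrix (Fin (d (t a))) (Fin (d (s a))) k)
        (F : ∀ i, Fin (d i) → Fin (d i) → k),
        (∀ i, ∀ r ∈ J i, ∀ c ∈ J i, F i r c = if r = c then 1 else 0) →
        (∀ a, ∀ c ∈ J (s a), ∀ r, ∑ c', m a r c' * F (s a) c' c =
          ∑ r' ∈ J (t a), F (t a) r r' * ∑ c', m a r' c' * F (s a) c' c) →
        MvPolynomial.eval (fun x => m x.1 x.2.1 x.2.2) q = 0) := by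
    intro J
    by_cases hJ : ∑ i, (J i).card * (d i - (J i).card) <
        ∑ a, (J (s a)).card * (d (t a) - (J (t a)).card)
    · obtain ⟨q, h1, h2⟩ := exists_chart_poly s t k d J hJ
      exact ⟨q, h1, fun _ => h2⟩
    · exact ⟨1, one_ne_zero, fun h => absurd h hJ⟩
  choose q hq0 hq using key
  refine ⟨∏ J, q J, Finset.prod_ne_zero_iff.2 fun J _ => hq0 J, ?_⟩
  intro m hm U hU
  choose J F hcard hF1 hF2 hF3 using fun i => exists_chart k (U i)
  by_contra hlt
  push Not at hlt
  have h1 : MvPolynomial.eval (fun x => m x.1 x.2.1 x.2.2) (q J) = 0 := by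
    apply hq J (by simpa only [hcard] using hlt) m F hF3
    intro a c hc r
    exact hF1 (t a) _ (hU a _ (hF2 (s a) c hc)) r
  apply hm
  rw [map_prod]
  exact Finset.prod_eq_zero (Finset.mem_univ J) h1

end Count

section Brick

/-- A square-zero endomorphism admits a good generalized inverse. -/
lemma exists_gen_inv {k V : Type} [Field k] [AddCommGroup V] [Module k V]
    (x : V →ₗ[k] V) (hx : ∀ v, x (x v) = 0) :
    ∃ σ : V →ₗ[k] V, (∀ v, x (σ (x v)) = x v) ∧ (∀ v, x (σ (σ v)) = 0) := by
  obtain ⟨r, hr⟩ := x.rangeRestrict.exists_rightInverse_of_surjective x.range_rangeRestrict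
  obtain ⟨p, hp⟩ := (LinearMap.range x).subtype.exists_leftInverse_of_injective
    (Submodule.ker_subtype _)
  let σ0 : V →ₗ[k] V := r.comp p
  have h0 : ∀ v, x (σ0 (x v)) = x v := by
    intro v
    have h1 : p (x v) = ⟨x v, v, rfl⟩ :=
      LinearMap.congr_fun hp (⟨x v, v, rfl⟩ : LinearMap.range x)
    have h2 := LinearMap.congr_fun hr (⟨x v, v, rfl⟩ : LinearMap.range x)
    have h3 := congrArg Subtype.val h2
    simpa [σ0, h1] using h3
  refine ⟨σ0 - x.comp (σ0.comp σ0), ?_, ?_⟩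
  · intro v
    simp [h0, hx]
  · intro v
    simp [h0, hx]

variable {Q0 Q1 : Type} (s t : Q1 → Q0)

/-- Generic indecomposability excludes square-zero endomorphisms. -/
lemma no_sq_zero (k : Type) [Field k] [CharZero k] (d : Q0 → ℕ)
    (p : MvPolynomial (RepCoords s t d) k)
    (hp : ∀ m : ∀ a : Q1, Matrix (Fin (d (t a))) (Fin (d (s a))) k,
      MvPolynomial.eval (fun x => m x.1 x.2.1 x.2.2) p ≠ 0 →
        Indecomposable s t k (matToRep s t k d m))
    (m : ∀ a : Q1, Matrix (Fin (d (t a))) (Fin (d (s a))) k)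
    (hm : MvPolynomial.eval (fun x => m x.1 x.2.1 x.2.2) p ≠ 0)
    (x : ∀ i, (Fin (d i) → k) →ₗ[k] (Fin (d i) → k))
    (hx : ∀ i v, x i (x i v) = 0)
    (hc : ∀ a v, x (t a) ((m a).mulVec v) = (m a).mulVec (x (s a) v)) :
    ∀ i v, x i v = 0 := by
  by_contra hne
  push Not at hne
  obtain ⟨i0, v0, hv0⟩ := hne
  choose σ hσ1 hσ2 using fun i => exists_gen_inv (x i) (hx i)
  -- the perturbation
  let Nl : ∀ a, (Fin (d (s a)) → k) →ₗ[k] (Fin (d (t a)) → k) := fun a =>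
    (σ (t a)).comp ((x (t a)).comp ((σ (t a)).comp ((m a).mulVecLin.comp
      (LinearMap.id - (x (s a)).comp (σ (s a))))))
  let N : ∀ a, Matrix (Fin (d (t a))) (Fin (d (s a))) k := fun a => LinearMap.toMatrix' (Nl a)
  have hN : ∀ a v, (N a).mulVec v = Nl a v := by
    intro a v
    rw [← Matrix.toLin'_apply, Matrix.toLin'_toMatrix']
  let f : Polynomial k := MvPolynomial.aeval
    (fun y : RepCoords s t d => Polynomial.C (m y.1 y.2.1 y.2.2) -
      Polynomial.X * Polynomial.C (N y.1 y.2.1 y.2.2)) p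
  have hf : ∀ ε, f.eval ε =
      MvPolynomial.eval (fun y => (m y.1 - ε • N y.1) y.2.1 y.2.2) p := by
    intro ε
    simp only [f]
    rw [MvPolynomial.aeval_def, MvPolynomial.eval₂_eq, Polynomial.eval_finsetSum,
      MvPolynomial.eval_eq]
    refine Finset.sum_congr rfl fun z _ => ?_
    simp [Polynomial.eval_prod, Polynomial.algebraMap_eq, mul_comm ε]
  have hf0 : ∀ ε, ε ≠ 0 → f.eval ε = 0 := by
    intro ε hε
    rw [hf]
    by_contra hcon
    have hind := hp (fun a => m a - ε • N a) hcon
    apply hind.2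
    let y : ∀ i, (Fin (d i) → k) →ₗ[k] (Fin (d i) → k) := fun i => x i + ε • (x i).comp (σ i)
    have hy : ∀ i v, y i v = x i v + ε • x i (σ i v) := fun i v => rfl
    have hyy : ∀ i v, y i (y i v) = ε • y i v := by
      intro i v
      simp only [hy, map_add, map_smul, hx, hσ1]
      simp
    have hxσ : ∀ i v, x i (σ i (x i v)) = x i v := hσ1
    have hcy : ∀ a v, y (t a) ((m a - ε • N a).mulVec v) = (m a - ε • N a).mulVec (y (s a) v) := by
      intro a v
      have hR : ∀ w, Nl a w = σ (t a) (x (t a) (σ (t a) ((m a).mulVec (w - x (s a) (σ (s a) w))))) :=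
        fun w => rfl
      have hz : y (s a) v - x (s a) (σ (s a) (y (s a) v)) = 0 := by
        simp only [hy, map_add, map_smul, hσ1]
        simp
      have h1 : Nl a (y (s a) v) = 0 := by
        rw [hR, hz]; simp
      rw [Matrix.sub_mulVec, Matrix.sub_mulVec, Matrix.smul_mulVec, Matrix.smul_mulVec, hN, hN, h1]
      have h2 : x (t a) (Nl a v) = x (t a) (σ (t a) ((m a).mulVec v)) -
          (m a).mulVec (x (s a) (σ (s a) v)) := by
        rw [hR, hσ1, Matrix.mulVec_sub, map_sub, map_sub]
        congr 1
        rw [← hc, hσ1]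
      have h3 : x (t a) (σ (t a) (Nl a v)) = 0 := by rw [hR, hσ2]
      simp only [hy, map_sub, map_smul, h2, h3, Matrix.mulVec_add, Matrix.mulVec_smul, hc]
      module
    have hcompl : ∀ i, IsCompl (LinearMap.range (y i)) (LinearMap.ker (y i)) := by
      intro i
      constructor
      · rw [Submodule.disjoint_def]
        rintro _ ⟨w, rfl⟩ hw
        have hw' : y i (y i w) = 0 := hw
        rw [hyy] at hw'
        exact (smul_eq_zero.1 hw').resolve_left hε
      · rw [codisjoint_iff, eq_top_iff]
        intro w _
        have e : w = y i (ε⁻¹ • w) + (w - y i (ε⁻¹ • w)) := by abel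
        rw [e]
        refine Submodule.add_mem_sup ⟨_, rfl⟩ ?_
        rw [LinearMap.mem_ker, map_sub, hyy, map_smul, smul_smul, mul_inv_cancel₀ hε, one_smul,
          sub_self]
    refine ⟨fun i => LinearMap.range (y i), fun i => LinearMap.ker (y i), ?_, ?_, ?_, ?_, ?_⟩
    · rintro a _ ⟨w, rfl⟩
      exact ⟨(m a - ε • N a).mulVec w, hcy a w⟩
    · intro a w hw
      have hw' : y (s a) w = 0 := hw
      have h := hcy a w
      rw [hw', Matrix.mulVec_zero] at h
      exact h
    · intro h
      have h1 : LinearMap.range (y i0) = ⊥ := congrFun h i0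
      have h2 : y i0 = 0 := LinearMap.range_eq_bot.1 h1
      have h3 : y i0 (σ i0 (x i0 v0)) = 0 := by rw [h2]; rfl
      rw [hy, hσ1, hσ2, smul_zero, add_zero] at h3
      exact hv0 h3
    · intro h
      have h1 : LinearMap.ker (y i0) = ⊥ := congrFun h i0
      have h2 : ∀ w, y i0 w = ε • w := by
        intro w
        have h3 : y i0 w - ε • w ∈ LinearMap.ker (y i0) := by
          rw [LinearMap.mem_ker, map_sub, map_smul, hyy, sub_self]
        rw [h1, Submodule.mem_bot, sub_eq_zero] at h3
        exact h3
      have h4 : x i0 (y i0 v0) = ε • x i0 v0 := by rw [h2, map_smul]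
      rw [hy, map_add, map_smul, hx, hx, smul_zero, add_zero] at h4
      exact (smul_ne_zero hε hv0) h4.symm
    · exact hcompl
  have hfz : f = 0 := by
    apply Polynomial.eq_zero_of_infinite_isRoot
    refine Set.Infinite.mono (s := {0}ᶜ) (fun ε hε => hf0 ε hε) ?_
    exact (Set.finite_singleton (0 : k)).infinite_compl
  apply hm
  have := hf 0
  rw [hfz] at this
  simpa using this.symm

/-- For an indecomposable representation without square-zero endomorphisms,
`⟨d - β, β⟩ < 0` for every proper nonzero subrepresentation. -/
lemma euler_neg [Fintype Q0] [Fintype Q1] (k : Type) [Field k] (M : QRep k s t)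
    (hind : Indecomposable s t k M)
    (hsq : ∀ x : ∀ i, M.V i →ₗ[k] M.V i, (∀ i v, x i (x i v) = 0) →
      (∀ a v, x (t a) (M.hom a v) = M.hom a (x (s a) v)) → ∀ i v, x i v = 0)
    (U : ∀ i, Submodule k (M.V i)) (hU : M.IsSubrep U)
    (hbot : U ≠ fun _ => ⊥) (htop : U ≠ fun _ => ⊤) :
    ∑ i, Module.finrank k (M.V i ⧸ U i) * Module.finrank k (U i) <
      ∑ a, Module.finrank k (M.V (s a) ⧸ U (s a)) * Module.finrank k (U (t a)) := by
  let Rq : ∀ a, (M.V (s a) ⧸ U (s a)) →ₗ[k] (M.V (t a) ⧸ U (t a)) := fun a =>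
    (U (s a)).mapQ (U (t a)) (M.hom a) (fun x hx => hU a x hx)
  let Ru : ∀ a, U (s a) →ₗ[k] U (t a) := fun a => (M.hom a).restrict (fun x hx => hU a x hx)
  let φ : (∀ i, (M.V i ⧸ U i) →ₗ[k] U i) →ₗ[k] (∀ a, (M.V (s a) ⧸ U (s a)) →ₗ[k] U (t a)) :=
    { toFun := fun f a => (f (t a)).comp (Rq a) - (Ru a).comp (f (s a))
      map_add' := by
        intro f g
        funext a
        ext v
        simp
        abel
      map_smul' := by
        intro c f
        funext a
        ext v
        simp [smul_sub] }
  have hφ : ∀ f a v, φ f a ((U (s a)).mkQ v) =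
      f (t a) ((U (t a)).mkQ (M.hom a v)) - Ru a (f (s a) ((U (s a)).mkQ v)) := by
    intro f a v; rfl
  have hRu : ∀ a u, ((Ru a u : U (t a)) : M.V (t a)) = M.hom a u := fun a u => rfl
  have hinj : Function.Injective φ := by
    rw [← LinearMap.ker_eq_bot, LinearMap.ker_eq_bot']
    intro f hf
    have h1 := hsq (fun i => (U i).subtype.comp ((f i).comp (U i).mkQ)) ?_ ?_
    · funext i
      ext v
      simpa using h1 i v
    · intro i v
      have : (U i).mkQ ((f i ((U i).mkQ v) : U i) : M.V i) = 0 := by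
        simp
      simp only [LinearMap.comp_apply, Submodule.subtype_apply, this, map_zero]
    · intro a v
      have h2 := hφ f a v
      rw [hf] at h2
      have h3 : f (t a) ((U (t a)).mkQ (M.hom a v)) = Ru a (f (s a) ((U (s a)).mkQ v)) :=
        (sub_eq_zero.1 h2.symm)
      simp only [LinearMap.comp_apply, Submodule.subtype_apply, h3, hRu]
  have hnsurj : ¬ Function.Surjective φ := by
    intro hsurj
    choose ρ hρ using fun i => (U i).subtype.exists_leftInverse_of_injective
      (Submodule.ker_subtype _)
    have hρ' : ∀ i (u : U i), ρ i u = u := fun i u => LinearMap.congr_fun (hρ i) u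
    obtain ⟨f, hf⟩ := hsurj (fun a => (U (s a)).liftQ
      ((ρ (t a)).comp (M.hom a) - (Ru a).comp (ρ (s a))) (by
        intro u hu
        rw [LinearMap.mem_ker]
        have h1 := hρ' (s a) ⟨u, hu⟩
        have h2 := hρ' (t a) (Ru a ⟨u, hu⟩)
        rw [hRu] at h2
        simp only at h1 h2
        simp only [LinearMap.sub_apply, LinearMap.comp_apply]
        rw [h1, h2, sub_self]))
    have hf' : ∀ a v, f (t a) ((U (t a)).mkQ (M.hom a v)) - Ru a (f (s a) ((U (s a)).mkQ v)) =
        ρ (t a) (M.hom a v) - Ru a (ρ (s a) v) := by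
      intro a v
      rw [← hφ, hf]
      rfl
    let r : ∀ i, M.V i →ₗ[k] U i := fun i => ρ i - (f i).comp (U i).mkQ
    have hr : ∀ i v, r i v = ρ i v - f i ((U i).mkQ v) := fun i v => rfl
    have hrU : ∀ i (u : U i), r i u = u := by
      intro i u
      have h0 : (U i).mkQ (u : M.V i) = 0 := by simp
      rw [hr, hρ', h0, map_zero, sub_zero]
    have hrc : ∀ a v, r (t a) (M.hom a v) = Ru a (r (s a) v) := by
      intro a v
      rw [hr, hr, map_sub]
      have := hf' a v
      rw [sub_eq_sub_iff_add_eq_add] at this ⊢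
      rw [← this, add_comm]
    have hcompl : ∀ i, IsCompl (U i) (LinearMap.ker (r i)) := by
      intro i
      exact LinearMap.isCompl_of_proj (hrU i)
    apply hind.2
    refine ⟨U, fun i => LinearMap.ker (r i), hU, ?_, hbot, ?_, hcompl⟩
    · intro a v hv
      rw [LinearMap.mem_ker] at hv ⊢
      rw [hrc, hv, map_zero]
    · intro h
      apply htop
      funext i
      have h1 := (hcompl i).sup_eq_top
      rw [show LinearMap.ker (r i) = ⊥ from congrFun h i, sup_bot_eq] at h1
      exact h1
  have hlt : Module.finrank k (∀ i, (M.V i ⧸ U i) →ₗ[k] U i) <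
      Module.finrank k (∀ a, (M.V (s a) ⧸ U (s a)) →ₗ[k] U (t a)) := by
    by_contra hle
    push Not at hle
    have heq := le_antisymm (LinearMap.finrank_le_finrank_of_injective hinj) hle
    exact hnsurj ((LinearMap.injective_iff_surjective_of_finrank_eq_finrank heq).1 hinj)
  simpa [Module.finrank_pi_fintype, Module.finrank_linearMap] using hlt

end Brick

section Final
variable {Q0 Q1 : Type} [Fintype Q0] [Fintype Q1] [DecidableEq Q0] (s t : Q1 → Q0)

lemma pair_theta (d e : Q0 → ℕ) (θd : Q0 → ℝ)
    (hθd : ∀ i, θd i =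
      ((euler s t (fun j => (d j : ℤ)) (Pi.single i 1) -
        euler s t (Pi.single i 1) (fun j => (d j : ℤ)) : ℤ) : ℝ)) :
    QRep.pair θd e = ((∑ a, ((e (s a) : ℤ) * d (t a) - d (s a) * e (t a)) : ℤ) : ℝ) := by
  have h1 : ∀ i, (euler s t (fun j => (d j : ℤ)) (Pi.single i 1) -
        euler s t (Pi.single i 1) (fun j => (d j : ℤ)) : ℤ) =
      ∑ a, ((if s a = i then (d (t a) : ℤ) else 0) - (if t a = i then (d (s a) : ℤ) else 0)) := by
    intro i
    simp [euler, Pi.single_apply, Finset.sum_sub_distrib]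
  have h2 : QRep.pair θd e = ((∑ i, (∑ a, ((if s a = i then (d (t a) : ℤ) else 0) -
      (if t a = i then (d (s a) : ℤ) else 0))) * (e i : ℤ) : ℤ) : ℝ) := by
    unfold QRep.pair
    push_cast
    refine Finset.sum_congr rfl fun i _ => ?_
    rw [hθd, h1]
    push_cast
    rfl
  rw [h2]
  congr 1
  simp only [Finset.sum_mul]
  rw [Finset.sum_comm]
  refine Finset.sum_congr rfl fun a _ => ?_
  simp [sub_mul, ite_mul, Finset.sum_sub_distrib]
  ring

/-- There is a representation all of whose proper nonzero subrepresentations have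
`θ_d ≤ -1`. -/
lemma exists_stable (k : Type) [Field k] [CharZero k]
    (d : Q0 → ℕ) (hschur : IsSchurRoot s t k d) (θd : Q0 → ℝ)
    (hθd : ∀ i, θd i =
      ((euler s t (fun j => (d j : ℤ)) (Pi.single i 1) -
        euler s t (Pi.single i 1) (fun j => (d j : ℤ)) : ℤ) : ℝ)) :
    ∃ M : QRep k s t, M.dimVec = d ∧ ∀ U : ∀ i, Submodule k (M.V i), M.IsSubrep U →
      (U ≠ fun _ => ⊥) → (U ≠ fun _ => ⊤) → QRep.pair θd (M.subDim U) ≤ -1 := by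
  obtain ⟨p, hp0, hp⟩ := hschur
  obtain ⟨q, hq0, hq⟩ := exists_generic_poly s t k d
  have hpq : p * q ≠ 0 := mul_ne_zero hp0 hq0
  obtain ⟨x, hx⟩ : ∃ x, MvPolynomial.eval x (p * q) ≠ 0 := by
    by_contra hcon
    push Not at hcon
    exact hpq (MvPolynomial.funext fun x => by rw [hcon, map_zero])
  let m : ∀ a : Q1, Matrix (Fin (d (t a))) (Fin (d (s a))) k := fun a r c => x ⟨a, r, c⟩
  have hx' : MvPolynomial.eval (fun y : RepCoords s t d => m y.1 y.2.1 y.2.2) (p * q) ≠ 0 := hx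
  rw [map_mul] at hx'
  have hmp := left_ne_zero_of_mul hx'
  have hmq := right_ne_zero_of_mul hx'
  refine ⟨matToRep s t k d m, ?_, ?_⟩
  · funext i
    exact Module.finrank_fin_fun k
  intro U hU hbot htop
  have h1 := hq m hmq U hU
  have h2 := euler_neg s t k (matToRep s t k d m) (hp m hmp)
    (fun x hx hc => no_sq_zero s t k d p hp m hmp x hx hc) U hU hbot htop
  have hle : ∀ i, Module.finrank k (U i) ≤ d i := by
    intro i
    have := Submodule.finrank_le (U i)
    exact this.trans (Module.finrank_fin_fun k).le
  have hquot : ∀ i, Module.finrank k ((matToRep s t k d m).V i ⧸ U i) =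
      d i - Module.finrank k (U i) := by
    intro i
    have h3 := Submodule.finrank_quotient_add_finrank (U i)
    have h4 : Module.finrank k ((matToRep s t k d m).V i) = d i := Module.finrank_fin_fun k
    omega
  simp only [hquot] at h2
  rw [pair_theta s t d _ θd hθd]
  set β : Q0 → ℕ := (matToRep s t k d m).subDim U with hβ
  have hβ' : ∀ i, Module.finrank k (U i) = β i := fun i => rfl
  have h3 : ∑ a, β (s a) * (d (t a) - β (t a)) < ∑ a, (d (s a) - β (s a)) * β (t a) := by
    refine lt_of_le_of_lt h1 (lt_of_le_of_lt (le_of_eq ?_) h2)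
    exact Finset.sum_congr rfl fun i _ => mul_comm _ _
  have h4 : ((∑ a, β (s a) * (d (t a) - β (t a)) : ℕ) : ℤ) + 1 ≤
      ((∑ a, (d (s a) - β (s a)) * β (t a) : ℕ) : ℤ) := by exact_mod_cast h3
  have hle' : ∀ i, β i ≤ d i := hle
  push_cast [Nat.cast_sub (hle' _)] at h4
  have h5 : ∑ a, ((β (s a) : ℤ) * d (t a) - d (s a) * β (t a)) =
      ∑ a, (β (s a) : ℤ) * ((d (t a) : ℤ) - β (t a)) -
      ∑ a, ((d (s a) : ℤ) - β (s a)) * β (t a) := by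
    rw [← Finset.sum_sub_distrib]
    exact Finset.sum_congr rfl fun a _ => by ring
  have h6 : ∑ a, ((β (s a) : ℤ) * d (t a) - d (s a) * β (t a)) ≤ -1 := by
    rw [h5]; linarith
  exact_mod_cast h6

end Final

/-- if `d` is a Schur root, there is a ball around the canonical stability
parameter `θ_d` in the stability space on which `η(e) < 0` for all proper nonzero generic
`e ↪ d`; consequently the ball lies in the semistable cone, which spans the stability space. -/
theorem stmt15 (k : Type) [Field k] [IsAlgClosed k] [CharZero k]
    {Q0 Q1 : Type} [Fintype Q0] [Fintype Q1] [DecidableEq Q0] (s t : Q1 → Q0)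
    (d : Q0 → ℕ) (hschur : IsSchurRoot s t k d) (θd : Q0 → ℝ)
    (hθd : ∀ i, θd i =
      ((euler s t (fun j => (d j : ℤ)) (Pi.single i 1) -
        euler s t (Pi.single i 1) (fun j => (d j : ℤ)) : ℤ) : ℝ)) :
    ∃ ε > (0 : ℝ),
      (∀ η : Q0 → ℝ, QRep.pair η d = 0 → ‖η - θd‖ < ε →
        ∀ e : Q0 → ℕ, e ≠ 0 → e ≠ d → GenericSub k s t e d → QRep.pair η e < 0) ∧
      (∀ η : Q0 → ℝ, QRep.pair η d = 0 → ‖η - θd‖ < ε → η ∈ SstCone k s t d) ∧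
      Submodule.span ℝ (SstCone k s t d) =
        Submodule.span ℝ {θ : Q0 → ℝ | QRep.pair θ d = 0} := by
  obtain ⟨M, hMd, hM⟩ := exists_stable s t k d hschur θd hθd
  have hadd : ∀ (x y : Q0 → ℝ) (e : Q0 → ℕ),
      QRep.pair (x + y) e = QRep.pair x e + QRep.pair y e := by
    intro x y e
    simp [QRep.pair, add_mul, Finset.sum_add_distrib]
  have hsmul : ∀ (c : ℝ) (x : Q0 → ℝ) (e : Q0 → ℕ),
      QRep.pair (c • x) e = c * QRep.pair x e := by
    intro c x e
    simp [QRep.pair, Finset.mul_sum, mul_assoc]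
  have hθdd : QRep.pair θd d = 0 := by
    rw [pair_theta s t d d θd hθd]
    simp
  set D : ℝ := ∑ i, (d i : ℝ) with hD
  have hD0 : 0 ≤ D := Finset.sum_nonneg fun i _ => Nat.cast_nonneg _
  have hpos : (0 : ℝ) < 1 / (D + 1) := by positivity
  have key : ∀ η : Q0 → ℝ, ‖η - θd‖ < 1 / (D + 1) →
      ∀ U : ∀ i, Submodule k (M.V i), M.IsSubrep U →
      (U ≠ fun _ => ⊥) → (U ≠ fun _ => ⊤) → QRep.pair η (M.subDim U) < 0 := by
    intro η hη U hU hb ht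
    have h1 := hM U hU hb ht
    have h2 : QRep.pair η (M.subDim U) =
        QRep.pair θd (M.subDim U) + QRep.pair (η - θd) (M.subDim U) := by
      rw [← hadd]; congr 1; abel
    have h3 : QRep.pair (η - θd) (M.subDim U) ≤ 1 / (D + 1) * D := by
      rw [hD, Finset.mul_sum]
      refine Finset.sum_le_sum fun i _ => ?_
      have h4 : (η - θd) i ≤ 1 / (D + 1) :=
        ((le_abs_self _).trans (norm_le_pi_norm (η - θd) i)).trans hη.le
      have h5 : M.subDim U i ≤ d i := by
        rw [← hMd]; exact Submodule.finrank_le (U i)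
      have h6 : (M.subDim U i : ℝ) ≤ d i := by exact_mod_cast h5
      exact mul_le_mul h4 h6 (Nat.cast_nonneg _) hpos.le
    have h7 : 1 / (D + 1) * D < 1 := by
      rw [one_div_mul_eq_div, div_lt_one (by linarith)]
      linarith
    linarith
  have hcone : ∀ η : Q0 → ℝ, QRep.pair η d = 0 → ‖η - θd‖ < 1 / (D + 1) →
      η ∈ SstCone k s t d := by
    intro η hη0 hη
    refine ⟨hη0, M, hMd, by rw [hMd]; exact hη0, ?_⟩
    intro U hU
    by_cases hb : U = fun _ => ⊥
    · subst hb
      apply le_of_eq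
      simp [QRep.pair, QRep.subDim]
    by_cases ht : U = fun _ => ⊤
    · subst ht
      apply le_of_eq
      rw [← hη0, ← hMd]
      congr 1
      funext i
      exact finrank_top k (M.V i)
    exact (key η hη U hU hb ht).le
  refine ⟨1 / (D + 1), hpos, ?_, hcone, ?_⟩
  · intro η _ hη e he0 hed hgen
    obtain ⟨U, hU, rfl⟩ := hgen.2 M hMd
    refine key η hη U hU ?_ ?_
    · rintro rfl
      apply he0
      funext i
      exact finrank_bot k (M.V i)
    · rintro rfl
      apply hed
      rw [← hMd]
      funext i
      exact finrank_top k (M.V i)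
  · apply le_antisymm
    · exact Submodule.span_mono fun θ hθ => hθ.1
    · rw [Submodule.span_le]
      intro θ hθ
      have hθ0 : QRep.pair θ d = 0 := hθ
      let c : ℝ := 1 / (D + 1) / (‖θ‖ + 1)
      have hc : 0 < c := by positivity
      have h1 : θd + c • θ ∈ SstCone k s t d := by
        apply hcone
        · rw [hadd, hsmul, hθdd, hθ0]; simp
        · rw [add_sub_cancel_left, norm_smul, Real.norm_of_nonneg hc.le]
          simp only [c]
          rw [div_mul_eq_mul_div, div_lt_iff₀ (by positivity)]
          exact mul_lt_mul_of_pos_left (by linarith) hpos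
      have h2 : θd ∈ SstCone k s t d := by
        apply hcone θd hθdd
        simpa using hpos
      have h3 : θ = c⁻¹ • ((θd + c • θ) - θd) := by
        rw [add_sub_cancel_left, smul_smul, inv_mul_cancel₀ hc.ne', one_smul]
      rw [h3]
      exact Submodule.smul_mem _ _ (Submodule.sub_mem _ (Submodule.subset_span h1)
        (Submodule.subset_span h2))
end
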